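/- Fix an integer k ≥ 1, a real ε with 0 < ε < 1/3, exponents e_1,…,e_k ∈ {1,2}, and positive integers r_1,…,r_k such that for each i either e_i = 1 and (r_i is odd or r_i = 2), or e_i = 2 and r_i = 1. Set d := 1 if e_i = 1 and r_i = 2 for all i, and d := 0 otherwise; set r := the smallest odd r_i if some r_i is odd, and r := 0 otherwise. Then there is a constant C = C(k, ε, (e_i), (r_i)) such that for all real X ≥ 2 and all distinct primes p_1, …, p_k ≥ 5 with p_1⋯p_k ≤ X^{1/3−ε}: if some r_j is odd, then | Σ_{(A,B)∈E(X)} ∏_{i=1}^{k} λ_{A,B}(p_i^{e_i})^{r_i} | ≤ C·2^{r}·(p_1⋯p_k)·X^{1/2}; and otherwise | Σ_{(A,B)∈E(X)} ∏_{i=1}^{k} λ_{A,B}(p_i^{e_i})^{r_i} − d·|E(X)| | ≤ C·( (p_1⋯p_k)·X^{1/2} + (Σ_{i=1}^{k} 1/p_i)·X^{5/6} ). -/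

import Mathlib

/-- Condition (M): for every prime `q`, `q⁴ ∣ A` implies `q⁶ ∤ B`. -/
def CondM (A B : ℤ) : Prop := ∀ q : ℕ, q.Prime → (q : ℤ) ^ 4 ∣ A → ¬ (q : ℤ) ^ 6 ∣ B

/-- The family `E(X)`: pairs `(A,B)` with `4A³+27B² ≠ 0`, naive height at most `X`,
satisfying condition (M). -/
def Efam (X : ℝ) : Set (ℤ × ℤ) :=
  {AB | 4 * AB.1 ^ 3 + 27 * AB.2 ^ 2 ≠ 0 ∧ ((max (|AB.1| ^ 3) (AB.2 ^ 2) : ℤ) : ℝ) ≤ X ∧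
        CondM AB.1 AB.2}

/-- `N_p(A,B)`: the number of `F_p`-rational points of the projective plane cubic
`y²z = x³ + Axz² + Bz³`. -/
noncomputable def Np (p : ℕ) (hp : p.Prime) (A B : ℤ) : ℕ :=
  letI : Fact p.Prime := ⟨hp⟩
  {P : Projectivization (ZMod p) (Fin 3 → ZMod p) |
    (P.rep 1) ^ 2 * P.rep 2 =
      (P.rep 0) ^ 3 + (A : ZMod p) * P.rep 0 * (P.rep 2) ^ 2 +
        (B : ZMod p) * (P.rep 2) ^ 3}.ncard

/-- `a_p(A,B) = p + 1 − N_p(A,B)`. -/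
noncomputable def apFrob (p : ℕ) (hp : p.Prime) (A B : ℤ) : ℤ :=
  (p : ℤ) + 1 - (Np p hp A B : ℤ)

/-- The normalized Dirichlet coefficient `λ(p^e)` for `e ∈ {1, 2}`:
`λ(p) = a_p/√p`; `λ(p²) = λ(p)² − 1` for good reduction and `λ(p)²` otherwise. -/
noncomputable def lamPow (p : ℕ) (hp : p.Prime) (A B : ℤ) (e : ℕ) : ℝ :=
  if e = 2 then
    (if (p : ℤ) ∣ (4 * A ^ 3 + 27 * B ^ 2) then ((apFrob p hp A B : ℝ) / Real.sqrt p) ^ 2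
     else ((apFrob p hp A B : ℝ) / Real.sqrt p) ^ 2 - 1)
  else (apFrob p hp A B : ℝ) / Real.sqrt p

/-!
By the Chinese remainder theorem the summand is a product of local functions, hence a function of
`(A, B)` modulo `p₁ ⋯ pₖ`. A pair other than the origin satisfies condition (M) iff no `d > 1` has
`d⁴ ∣ A` and `d⁶ ∣ B`, so Möbius inversion over `d` turns the sum over `E(X)` into sums over boxes.
Each of these is its number of points times the mean value of the summand, up to an error from the
boundary, because `(d⁴a, d⁶b)` and `(a, b)` give isomorphic curves when `d` is prime to every `pᵢ`,
while the remaining `d` contribute `O(∑ 1 / pᵢ²)`.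

The mean value is a product of local ones. Quadratic twisting makes the odd moments of `λ(p)`
vanish, and opening the square gives second moment `1 - 1 / p`; this leaves `O(1 / p)` for the mean
of `λ(p²) = λ(p)² - 1`, the correction at the singular curves included. The only pointwise bound
needed is `|a_p| ≤ 45 √p`, which follows from Stepanov's method.
-/

section Stepanov

open Polynomial Finset

theorem sq_mul_eq_C_mul_sq_iff {F : Type*} [Field F] {f r s : F[X]} {a : F}
    (hf : Odd f.natDegree) (ha : a ≠ 0) : r ^ 2 * f = C a * s ^ 2 ↔ r = 0 ∧ s = 0 := by
  refine ⟨fun h ↦ ?_, fun ⟨hr, hs⟩ ↦ by simp [hr, hs]⟩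
  have hf0 : f ≠ 0 := by rintro rfl; simp at hf
  have hrs : r = 0 ↔ s = 0 := by
    constructor <;> rintro rfl
    · simpa [ha] using h.symm
    · simpa [hf0] using h
  by_contra hne
  have hr : r ≠ 0 := fun hr ↦ hne ⟨hr, hrs.1 hr⟩
  have hdeg := congrArg natDegree h
  rw [natDegree_mul (pow_ne_zero 2 hr) hf0, natDegree_C_mul ha, natDegree_pow, natDegree_pow]
    at hdeg
  obtain ⟨g, hg⟩ := hf
  omega

section Derivatives

variable {R : Type*} [CommRing R]

/-- The operator `D` for which `f ^ n * r * h`, with `h' = 0`, has `k`-th derivative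
`f ^ (n - k) * D r * h`. -/
noncomputable def stepanovDeriv (f : R[X]) (n : ℕ) : ℕ → R[X] →ₗ[R] R[X]
  | 0 => LinearMap.id
  | k + 1 => (LinearMap.mulLeft R ((n - k : ℕ) * derivative f) +
      LinearMap.mulLeft R f ∘ₗ derivative) ∘ₗ stepanovDeriv f n k

theorem stepanovDeriv_succ_apply (f : R[X]) (n k : ℕ) (r : R[X]) :
    stepanovDeriv f n (k + 1) r =
      (n - k : ℕ) * derivative f * stepanovDeriv f n k r +
        f * derivative (stepanovDeriv f n k r) := by
  simp [stepanovDeriv, mul_assoc]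

theorem iterate_derivative_pow_mul_mul (f r : R[X]) {h : R[X]} (hh : derivative h = 0)
    {n k : ℕ} (hk : k ≤ n) :
    derivative^[k] (f ^ n * r * h) = f ^ (n - k) * stepanovDeriv f n k r * h := by
  induction k with
  | zero => simp [stepanovDeriv]
  | succ k ih =>
    obtain ⟨m, rfl⟩ : ∃ m, n = k + 1 + m := Nat.exists_eq_add_of_le hk
    have hsub : k + 1 + m - k = m + 1 := by omega
    rw [Function.iterate_succ_apply', ih (by omega), stepanovDeriv_succ_apply, hsub,
      Nat.add_sub_cancel_left]
    simp only [derivative_mul, derivative_pow_succ, hh]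
    push_cast
    simp only [map_add, map_natCast, map_one]
    ring

theorem natDegree_stepanovDeriv_le {f : R[X]} {d : ℕ} (hf : f.natDegree ≤ d + 1) (n k : ℕ)
    (r : R[X]) : (stepanovDeriv f n k r).natDegree ≤ r.natDegree + d * k := by
  induction k with
  | zero => simp [stepanovDeriv]
  | succ k ih =>
    rw [stepanovDeriv_succ_apply]
    set u := stepanovDeriv f n k r
    have hfu : ((n - k : ℕ) * derivative f * u).natDegree ≤ u.natDegree + d := by
      have hf' : ((n - k : ℕ) * derivative f).natDegree ≤ d := by
        refine natDegree_mul_le.trans ?_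
        have := natDegree_derivative_le f
        rw [natDegree_natCast]
        omega
      exact natDegree_mul_le.trans (by omega)
    have hu' : (f * derivative u).natDegree ≤ u.natDegree + d := by
      rcases eq_or_ne u.natDegree 0 with hu | hu
      · simp [derivative_of_natDegree_zero hu]
      · have := natDegree_derivative_le u
        exact natDegree_mul_le.trans (by omega)
    calc _ ≤ u.natDegree + d := natDegree_add_le_of_degree_le hfu hu'
      _ ≤ r.natDegree + d * (k + 1) := by linarith

end Derivatives

variable {F : Type*} [Field F]

theorem exists_ne_zero_forall_eq_zero_of_forall_mem_degreeLT {V : Type*} [AddCommGroup V]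
    [Module F V] [FiniteDimensional F V] {l N : ℕ} (T : Fin l → V →ₗ[F] F[X])
    (hT : ∀ k v, T k v ∈ degreeLT F N) (h : l * N < Module.finrank F V) :
    ∃ v ≠ 0, ∀ k, T k v = 0 := by
  have hker :
      LinearMap.ker (LinearMap.pi fun k ↦ (T k).codRestrict (degreeLT F N) (hT k)) ≠ ⊥ := by
    have : FiniteDimensional F (degreeLT F N) := (degreeLTEquiv F N).symm.finiteDimensional
    apply LinearMap.ker_ne_bot_of_finrank_lt
    simpa [Module.finrank_pi_fintype, (degreeLTEquiv F N).finrank_eq] using h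
  obtain ⟨v, hv, hv0⟩ := Submodule.exists_mem_ne_zero_of_ne_bot hker
  exact ⟨v, hv0, fun k ↦ congrArg Subtype.val (congrFun (LinearMap.mem_ker.1 hv) k)⟩

theorem exists_sum_stepanovDeriv_eq_zero {f : F[X]} {d : ℕ} (hf : f.natDegree ≤ d + 1)
    {c l J : ℕ} (h : l * (c + d * l + J) < 2 * (c * J)) (m n : ℕ) (a : F) :
    ∃ r s : Fin J → degreeLT F c, (r, s) ≠ 0 ∧ ∀ k < l,
      ∑ j, (stepanovDeriv f m k (r j) + a • stepanovDeriv f n k (s j)) * X ^ (j : ℕ) = 0 := by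
  let T (k : Fin l) : (Fin J → degreeLT F c) × (Fin J → degreeLT F c) →ₗ[F] F[X] :=
    ∑ j : Fin J, LinearMap.mulRight F (X ^ (j : ℕ)) ∘ₗ
      ((stepanovDeriv f m k ∘ₗ (degreeLT F c).subtype ∘ₗ LinearMap.proj j).coprod
        (a • stepanovDeriv f n k ∘ₗ (degreeLT F c).subtype ∘ₗ LinearMap.proj j))
  have hTapply (k v) : T k v =
      ∑ j, (stepanovDeriv f m k (v.1 j) + a • stepanovDeriv f n k (v.2 j)) * X ^ (j : ℕ) := by
    simp [T]
  have hD (n : ℕ) (k : Fin l) (u : degreeLT F c) :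
      stepanovDeriv f n k u ∈ degreeLT F (c + d * l) := by
    rcases eq_or_ne u 0 with rfl | hu
    · simp
    have huc := (natDegree_lt_iff_degree_lt (by simpa using hu)).2 (mem_degreeLT.1 u.2)
    refine mem_degreeLT.2 (degree_le_natDegree.trans_lt (Nat.cast_lt.2 ?_))
    calc _ ≤ (u : F[X]).natDegree + d * k := natDegree_stepanovDeriv_le hf n k u
      _ < c + d * l := add_lt_add_of_lt_of_le huc (Nat.mul_le_mul_left d k.2.le)
  have hT (k v) : T k v ∈ degreeLT F (c + d * l + J) := by
    rw [hTapply]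
    refine sum_mem fun j _ ↦ mem_degreeLT.2 ?_
    have hmem := add_mem (hD m k (v.1 j)) (Submodule.smul_mem _ a (hD n k (v.2 j)))
    rw [degree_mul, degree_X_pow, Nat.cast_add]
    exact WithBot.add_lt_add_of_lt_of_le (by simp) (mem_degreeLT.1 hmem) (by exact_mod_cast j.2.le)
  obtain ⟨v, hv0, hv⟩ := exists_ne_zero_forall_eq_zero_of_forall_mem_degreeLT T hT (by
    simpa [Module.finrank_pi_fintype, (degreeLTEquiv F c).finrank_eq, ← two_mul, mul_comm J c]
      using h)
  exact ⟨v.1, v.2, hv0, fun k hk ↦ (hTapply ⟨k, hk⟩ v).symm.trans (hv ⟨k, hk⟩)⟩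

theorem mul_card_le_natDegree_of_isRoot_iterate_derivative {P : F[X]} (hP : P ≠ 0) {l : ℕ}
    (hl : ((l - 1).factorial : F) ≠ 0) {S : Finset F}
    (hS : ∀ x ∈ S, ∀ k < l, (derivative^[k] P).IsRoot x) : l * #S ≤ P.natDegree := by
  classical
  have hmult : ∀ x ∈ S, l ≤ P.roots.count x := fun x hx ↦ by
    rcases l.eq_zero_or_pos with rfl | hl0
    · exact Nat.zero_le _
    have := lt_rootMultiplicity_of_isRoot_iterate_derivative_of_mem_nonZeroDivisors (n := l - 1)
      hP (fun m hm ↦ hS x hx m (by omega)) (mem_nonZeroDivisors_of_ne_zero hl)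
    rw [count_roots]
    omega
  have hle : l • S.val ≤ P.roots := Multiset.le_iff_count.2 fun x ↦ by
    rw [Multiset.count_nsmul, Multiset.count_eq_of_nodup S.nodup]
    split_ifs with hx
    · simpa using hmult x hx
    · simp
  calc l * #S = Multiset.card (l • S.val) := by simp
    _ ≤ Multiset.card P.roots := Multiset.card_le_card hle
    _ ≤ P.natDegree := card_roots' P

theorem degree_mul_sq_lt {f r : F[X]} {c N : ℕ} (hf : f ≠ 0) (hr : r ∈ degreeLT F c)
    (hc : 2 * c + f.natDegree ≤ N) : (f * r ^ 2).degree < N := by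
  rcases eq_or_ne r 0 with rfl | hr0
  · simp
  rw [← natDegree_lt_iff_degree_lt (mul_ne_zero hf (pow_ne_zero 2 hr0)),
    natDegree_mul hf (pow_ne_zero 2 hr0), natDegree_pow]
  have := (natDegree_lt_iff_degree_lt hr0).2 (mem_degreeLT.1 hr)
  omega

variable [Fintype F]

theorem X_pow_card_dvd_pow_card_sub_C (f : F[X]) :
    X ^ Fintype.card F ∣ f ^ Fintype.card F - C (f.coeff 0) := by
  have hX : X ∣ f - C (f.coeff 0) := X_dvd_iff.2 (by simp)
  have h := _root_.map_dvd (expand F (Fintype.card F)) hX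
  rwa [expand_X, map_sub, expand_C, FiniteField.expand_card] at h

variable {f : F[X]} {c : ℕ}

-- Multiplying by `(r - s f ^ (q / 2)) f` and reducing mod `X ^ q` gives `r² f = f(0) s²`.
theorem eq_zero_of_X_pow_card_dvd_add_mul_pow (hF : ringChar F ≠ 2) (hf : Odd f.natDegree)
    (hf0 : f.coeff 0 ≠ 0) (hc : 2 * c + f.natDegree ≤ Fintype.card F) {r s : F[X]}
    (hr : r ∈ degreeLT F c) (hs : s ∈ degreeLT F c)
    (h : X ^ Fintype.card F ∣ r + s * f ^ (Fintype.card F / 2)) : r = 0 ∧ s = 0 := by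
  have hf1 : f ≠ 0 := by rintro rfl; simp at hf0
  have hq := FiniteField.odd_card_of_char_ne_two hF
  have hpow : f ^ Fintype.card F =
      f ^ (Fintype.card F / 2) * f ^ (Fintype.card F / 2) * f := by
    rw [← pow_add, ← pow_succ]
    congr 1
    omega
  have hdvd : X ^ Fintype.card F ∣ f * r ^ 2 - C (f.coeff 0) * s ^ 2 := by
    have hid : f * r ^ 2 - C (f.coeff 0) * s ^ 2 =
        (r + s * f ^ (Fintype.card F / 2)) * ((r - s * f ^ (Fintype.card F / 2)) * f) +
          (f ^ Fintype.card F - C (f.coeff 0)) * s ^ 2 := by rw [hpow]; ring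
    rw [hid]
    exact dvd_add (h.mul_right _) ((X_pow_card_dvd_pow_card_sub_C f).mul_right _)
  have hzero : f * r ^ 2 - C (f.coeff 0) * s ^ 2 = 0 := by
    refine eq_zero_of_dvd_of_degree_lt hdvd ?_
    rw [degree_X_pow]
    refine (degree_sub_le _ _).trans_lt (max_lt (degree_mul_sq_lt hf1 hr hc) ?_)
    exact degree_mul_sq_lt (C_ne_zero.2 hf0) hs (by rw [natDegree_C]; omega)
  rw [sub_eq_zero, mul_comm f] at hzero
  exact (sq_mul_eq_C_mul_sq_iff hf hf0).1 hzero

/-- The auxiliary polynomial `∑ⱼ (rⱼ + sⱼ f ^ (q / 2)) X ^ (q j)` of Stepanov's method over the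
field with `q` elements. -/
noncomputable def stepanovPoly (f : F[X]) {J : ℕ} (r s : Fin J → F[X]) : F[X] :=
  ∑ j, (r j + s j * f ^ (Fintype.card F / 2)) * X ^ (Fintype.card F * (j : ℕ))

theorem stepanovPoly_succ (f : F[X]) {J : ℕ} (r s : Fin (J + 1) → F[X]) :
    stepanovPoly f r s = r 0 + s 0 * f ^ (Fintype.card F / 2) +
      X ^ Fintype.card F * stepanovPoly f (Fin.tail r) (Fin.tail s) := by
  simp only [stepanovPoly, Fin.sum_univ_succ, Fin.val_zero, mul_zero, pow_zero, mul_one,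
    Fin.val_succ, mul_sum, Fin.tail]
  congr 1
  exact sum_congr rfl fun j _ ↦ by ring

theorem eq_zero_of_stepanovPoly_eq_zero (hF : ringChar F ≠ 2) (hf : Odd f.natDegree)
    (hf0 : f.coeff 0 ≠ 0) (hc : 2 * c + f.natDegree ≤ Fintype.card F) {J : ℕ}
    {r s : Fin J → F[X]} (hr : ∀ j, r j ∈ degreeLT F c) (hs : ∀ j, s j ∈ degreeLT F c)
    (h : stepanovPoly f r s = 0) : r = 0 ∧ s = 0 := by
  induction J with
  | zero => exact ⟨Subsingleton.elim _ _, Subsingleton.elim _ _⟩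
  | succ J ih =>
    rw [stepanovPoly_succ] at h
    obtain ⟨hr0, hs0⟩ := eq_zero_of_X_pow_card_dvd_add_mul_pow hF hf hf0 hc (hr 0) (hs 0)
      ((dvd_add_left (Dvd.intro _ rfl)).1 (h ▸ dvd_zero _))
    rw [hr0, hs0, zero_mul, add_zero, zero_add] at h
    obtain ⟨hrt, hst⟩ := ih (fun j ↦ hr j.succ) (fun j ↦ hs j.succ)
      ((mul_eq_zero.1 h).resolve_left (pow_ne_zero _ X_ne_zero))
    exact ⟨funext (Fin.cases hr0 (congrFun hrt)), funext (Fin.cases hs0 (congrFun hst))⟩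

theorem natDegree_stepanovPoly_le (f : F[X]) {J : ℕ} {r s : Fin J → F[X]}
    (hr : ∀ j, r j ∈ degreeLT F c) (hs : ∀ j, s j ∈ degreeLT F c) :
    (stepanovPoly f r s).natDegree ≤
      c + Fintype.card F / 2 * f.natDegree + Fintype.card F * (J - 1) := by
  refine natDegree_sum_le_of_forall_le _ _ fun j _ ↦ natDegree_mul_le.trans ?_
  rw [natDegree_X_pow]
  have hc {u : F[X]} (hu : u ∈ degreeLT F c) : u.natDegree ≤ c :=
    natDegree_le_of_degree_le (mem_degreeLT.1 hu).le
  gcongr ?_ + _ * ?_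
  · refine natDegree_add_le_of_degree_le ((hc (hr j)).trans (Nat.le_add_right _ _)) ?_
    exact natDegree_mul_le.trans (add_le_add (hc (hs j)) (natDegree_pow_le))
  · omega

theorem isRoot_iterate_derivative_pow_mul_stepanovPoly {J k l : ℕ} (hk : k ≤ l)
    (r s : Fin J → F[X]) {a x : F} (hx : f.eval x ^ (Fintype.card F / 2) = a)
    (h : ∑ j, (stepanovDeriv f l k (r j) +
      a • stepanovDeriv f (l + Fintype.card F / 2) k (s j)) * X ^ (j : ℕ) = 0) :
    (derivative^[k] (f ^ l * stepanovPoly f r s)).IsRoot x := by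
  set m := Fintype.card F / 2
  have hX (j : ℕ) : derivative ((X : F[X]) ^ (Fintype.card F * j)) = 0 := by
    rw [derivative_X_pow]
    simp
  have hterm (j : Fin J) :
      f ^ l * ((r j + s j * f ^ m) * X ^ (Fintype.card F * (j : ℕ))) =
        f ^ l * r j * X ^ (Fintype.card F * (j : ℕ)) +
          f ^ (l + m) * s j * X ^ (Fintype.card F * (j : ℕ)) := by ring
  have hsub : l + m - k = l - k + m := by omega
  have heval := congrArg (fun P ↦ f.eval x ^ (l - k) * P.eval x) h
  simp only [eval_zero, mul_zero, eval_finsetSum, mul_sum] at heval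
  rw [IsRoot.def, stepanovPoly, mul_sum, iterate_derivative_sum, eval_finsetSum, ← heval]
  refine sum_congr rfl fun j _ ↦ ?_
  rw [hterm, iterate_map_add, iterate_derivative_pow_mul_mul f _ (hX j) hk,
    iterate_derivative_pow_mul_mul f _ (hX j) (hk.trans (Nat.le_add_right _ _)), hsub]
  simp only [eval_add, eval_mul, eval_pow, eval_X, eval_smul, smul_eq_mul, pow_add, pow_mul,
    FiniteField.pow_card, hx]
  ring

theorem mul_card_filter_eval_pow_eq_le [DecidableEq F] (hF : ringChar F ≠ 2) (hf : Odd f.natDegree)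
    (hf0 : f.coeff 0 ≠ 0) (hc : 2 * c + f.natDegree ≤ Fintype.card F) {l J : ℕ}
    (hl : l ≤ ringChar F) (hlJ : l * (c + (f.natDegree - 1) * l + J) < 2 * (c * J)) (a : F) :
    l * #{x : F | f.eval x ^ (Fintype.card F / 2) = a} ≤
      f.natDegree * (l + Fintype.card F / 2) + c + Fintype.card F * (J - 1) := by
  obtain ⟨r, s, hrs, hsum⟩ := exists_sum_stepanovDeriv_eq_zero (f := f) (by omega) hlJ l
    (l + Fintype.card F / 2) a
  set S := stepanovPoly f (fun j ↦ (r j : F[X])) (fun j ↦ (s j : F[X])) with hS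
  have hS0 : S ≠ 0 := fun h0 ↦ hrs <| by
    obtain ⟨hr, hs⟩ := eq_zero_of_stepanovPoly_eq_zero hF hf hf0 hc (fun j ↦ (r j).2)
      (fun j ↦ (s j).2) h0
    exact Prod.ext (funext fun j ↦ Subtype.ext (congrFun hr j))
      (funext fun j ↦ Subtype.ext (congrFun hs j))
  have hprime : (ringChar F).Prime := CharP.char_is_prime F _
  have hfact : ((l - 1).factorial : F) ≠ 0 := by
    rw [Ne, CharP.cast_eq_zero_iff F (ringChar F), hprime.dvd_factorial]
    have := hprime.pos
    omega
  have hfne : f ≠ 0 := by rintro rfl; simp at hf0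
  have hroots := mul_card_le_natDegree_of_isRoot_iterate_derivative
    (mul_ne_zero (pow_ne_zero l hfne) hS0) hfact
    (S := {x : F | f.eval x ^ (Fintype.card F / 2) = a}) fun x hx k hk ↦
      isRoot_iterate_derivative_pow_mul_stepanovPoly hk.le _ _ (by simpa using hx) (hsum k hk)
  have hdegS : S.natDegree ≤ _ :=
    natDegree_stepanovPoly_le f (fun j ↦ (r j).2) (fun j ↦ (s j).2)
  calc _ ≤ (f ^ l * S).natDegree := hroots
    _ ≤ l * f.natDegree + S.natDegree := by
      refine natDegree_mul_le.trans (Nat.add_le_add_right natDegree_pow_le _)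
    _ ≤ l * f.natDegree +
        (c + Fintype.card F / 2 * f.natDegree + Fintype.card F * (J - 1)) := by gcongr
    _ = _ := by ring

end Stepanov

section CharacterSum

open Polynomial Finset

section FiniteField

variable {F : Type*} [Field F] [Fintype F] [DecidableEq F]

theorem quadraticChar_eq_ite_sub_ite (hF : ringChar F ≠ 2) (y : F) :
    quadraticChar F y = (if y ^ (Fintype.card F / 2) = 1 then 1 else 0) -
      (if y ^ (Fintype.card F / 2) = -1 then 1 else 0) := by
  have hne : (1 : F) ≠ -1 := (Ring.neg_one_ne_one_of_char_ne_two hF).symm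
  rcases eq_or_ne y 0 with rfl | hy
  · have hq := Fintype.one_lt_card (α := F)
    simp [zero_pow (show Fintype.card F / 2 ≠ 0 by omega)]
  · rw [quadraticChar_eq_pow_of_char_ne_two hF hy]
    rcases FiniteField.pow_dichotomy hF hy with h | h <;> simp [h, hne, hne.symm]

theorem card_filter_eval_eq_zero_le {f : F[X]} (hf : f ≠ 0) :
    #{x : F | f.eval x = 0} ≤ f.natDegree := by
  have hsub : ({x : F | f.eval x = 0} : Finset F) ⊆ f.roots.toFinset := fun x hx ↦ by
    simpa [hf] using hx
  exact (card_le_card hsub).trans ((Multiset.toFinset_card_le _).trans (card_roots' f))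

theorem card_filter_eval_pow_eq_one_add_neg_one_add_zero (hF : ringChar F ≠ 2) (f : F[X]) :
    #{x : F | f.eval x ^ (Fintype.card F / 2) = 1} +
      #{x : F | f.eval x ^ (Fintype.card F / 2) = -1} + #{x : F | f.eval x = 0} =
        Fintype.card F := by
  have hne : (1 : F) ≠ -1 := (Ring.neg_one_ne_one_of_char_ne_two hF).symm
  rw [Fintype.card_eq_sum_ones, card_filter, card_filter, card_filter, ← sum_add_distrib,
    ← sum_add_distrib]
  refine sum_congr rfl fun x _ ↦ ?_
  rcases eq_or_ne (f.eval x) 0 with hx | hx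
  · have hq := Fintype.one_lt_card (α := F)
    simp [hx, zero_pow (show Fintype.card F / 2 ≠ 0 by omega)]
  · rcases FiniteField.pow_dichotomy hF hx with h | h <;> simp [h, hne, hne.symm, hx]

theorem abs_sum_quadraticChar_eval_le (hF : ringChar F ≠ 2) {f : F[X]} (hf : f ≠ 0) {B : ℝ}
    (hB : ∀ a : F, (#{x : F | f.eval x ^ (Fintype.card F / 2) = a} : ℝ) ≤ B) :
    |((∑ x, quadraticChar F (f.eval x) : ℤ) : ℝ)| ≤ 2 * B + f.natDegree - Fintype.card F := by
  have hsum : ∑ x, quadraticChar F (f.eval x) =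
      (#{x : F | f.eval x ^ (Fintype.card F / 2) = 1} : ℤ) -
        #{x : F | f.eval x ^ (Fintype.card F / 2) = -1} := by
    simp only [quadraticChar_eq_ite_sub_ite hF, sum_sub_distrib, sum_boole]
  have htotal : ((_ + _ + _ : ℕ) : ℝ) = Fintype.card F :=
    congrArg _ (card_filter_eval_pow_eq_one_add_neg_one_add_zero hF f)
  have hzero : (#{x : F | f.eval x = 0} : ℝ) ≤ f.natDegree := by
    exact_mod_cast card_filter_eval_eq_zero_le hf
  push_cast at htotal
  rw [hsum, abs_le]
  push_cast
  constructor <;> linarith [hB 1, hB (-1)]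

end FiniteField

variable {p : ℕ} [Fact p.Prime]

theorem ringChar_zmod_ne_two (hp : 5 ≤ p) : ringChar (ZMod p) ≠ 2 := by
  rw [ZMod.ringChar_zmod_n]
  omega

-- The parameters of Stepanov's method are `l = 2n` derivatives and `J = n + 12` blocks of
-- degree `< c`, where `n = ⌊√c⌋`.
theorem card_filter_eval_pow_eq_le_half_add_sqrt (hp : 5 ≤ p) {f : (ZMod p)[X]}
    (hf : f.natDegree = 3) (hf0 : f.coeff 0 ≠ 0) (a : ZMod p) :
    (#{x : ZMod p | f.eval x ^ (p / 2) = a} : ℝ) ≤ p / 2 + 21 * √p := by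
  set N := #{x : ZMod p | f.eval x ^ (p / 2) = a}
  have hsqrt : √(p : ℝ) * √p = p := Real.mul_self_sqrt p.cast_nonneg
  have hsqrt2 : 2 ≤ √(p : ℝ) := Real.le_sqrt_of_sq_le (by norm_num; exact_mod_cast by omega)
  obtain ⟨c, hpc⟩ : ∃ c, p = 2 * c + 3 := by
    obtain ⟨m, hm⟩ := (Fact.out : p.Prime).odd_of_ne_two (by omega)
    exact ⟨m - 1, by omega⟩
  set n := c.sqrt
  have hnc : n * n ≤ c := c.sqrt_le
  have hcn : c < (n + 1) * (n + 1) := c.lt_succ_sqrt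
  rcases lt_or_ge n 2 with hn | hn
  · have hc : c < 4 := hcn.trans_le (Nat.mul_le_mul hn hn)
    have hp11 : (p : ℝ) ≤ 11 := by exact_mod_cast (by omega : p ≤ 11)
    have hNp : (N : ℝ) ≤ p := by
      exact_mod_cast (card_filter_le _ _).trans_eq (by rw [card_univ, ZMod.card])
    linarith
  have hstep : 2 * n * N ≤ 6 * n + (n + 13) * p := by
    have h := mul_card_filter_eval_pow_eq_le (c := c) (l := 2 * n) (J := n + 12)
      (ringChar_zmod_ne_two hp) (by rw [hf]; decide) hf0 (by rw [hf, ZMod.card, hpc])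
      (by rw [ZMod.ringChar_zmod_n]; nlinarith) (by rw [hf]; nlinarith) a
    rw [hf, ZMod.card] at h
    have : 3 * (p / 2) + c ≤ 2 * p := by omega
    calc 2 * n * N ≤ 3 * (2 * n + p / 2) + c + p * (n + 11) := h
      _ ≤ 6 * n + (n + 13) * p := by linarith
  have hstep' : (2 : ℝ) * n * N ≤ 6 * n + (n + 13) * p := by exact_mod_cast hstep
  have hsqrtn : √(p : ℝ) ≤ 3 * n := by
    have hp6 : (p : ℝ) ≤ 6 * n ^ 2 := by exact_mod_cast (by nlinarith : p ≤ 6 * n ^ 2)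
    rw [Real.sqrt_le_left (by positivity)]
    nlinarith
  have hpn : (p : ℝ) ≤ 3 * n * √p := by nlinarith
  refine le_of_mul_le_mul_left ?_ (show (0 : ℝ) < 2 * n by positivity)
  nlinarith

theorem abs_sum_quadraticChar_cubic_le (hp : 5 ≤ p) (a b : ZMod p) :
    |((∑ x, quadraticChar (ZMod p) (x ^ 3 + a * x + b) : ℤ) : ℝ)| ≤ 45 * √p := by
  set f : (ZMod p)[X] := X ^ 3 + C a * X + C b
  have hdeg : f.natDegree = 3 := by unfold f; compute_degree!
  have hf : f ≠ 0 := by rintro h; simp [h] at hdeg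
  obtain ⟨x₀, hx₀⟩ : ∃ x₀, f.eval x₀ ≠ 0 := by
    by_contra! h
    refine hf (eq_zero_of_natDegree_lt_card_of_eval_eq_zero' f univ (fun x _ ↦ h x) ?_)
    rw [hdeg, card_univ, ZMod.card]
    omega
  set g := f.comp (X + C x₀)
  have hgdeg : g.natDegree = 3 := by rw [natDegree_comp, hdeg, natDegree_X_add_C]
  have hg0 : g.coeff 0 ≠ 0 := by simpa [g, coeff_zero_eq_eval_zero, eval_comp] using hx₀
  have htranslate : ∑ x, quadraticChar (ZMod p) (x ^ 3 + a * x + b) =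
      ∑ x, quadraticChar (ZMod p) (g.eval x) := by
    rw [← Equiv.sum_comp (Equiv.addRight x₀)]
    simp [g, f]
  have h := abs_sum_quadraticChar_eval_le (ringChar_zmod_ne_two hp)
    (f := g) (by rintro h; simp [h] at hg0)
    (by simpa only [ZMod.card] using card_filter_eval_pow_eq_le_half_add_sqrt hp hgdeg hg0)
  have hsqrt : 1 ≤ √(p : ℝ) := Real.one_le_sqrt.2 (by exact_mod_cast (by omega : 1 ≤ p))
  rw [hgdeg, ZMod.card] at h
  push_cast at h
  rw [htranslate]
  push_cast
  linarith

end CharacterSum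

section PointCount

open Finset

variable {K : Type*} [Field K]

/-- `v` satisfies the homogeneous equation `y²z = x³ + axz² + bz³`, where `v = (x, y, z)`. -/
def IsCurvePoint (a b : K) (v : Fin 3 → K) : Prop :=
  v 1 ^ 2 * v 2 = v 0 ^ 3 + a * v 0 * v 2 ^ 2 + b * v 2 ^ 3

theorem isCurvePoint_smul_iff {a b c : K} (hc : c ≠ 0) (v : Fin 3 → K) :
    IsCurvePoint a b (c • v) ↔ IsCurvePoint a b v := by
  simp only [IsCurvePoint, Pi.smul_apply, smul_eq_mul]
  refine ⟨fun h ↦ mul_left_cancel₀ (pow_ne_zero 3 hc) ?_, fun h ↦ ?_⟩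
  · linear_combination h
  · linear_combination c ^ 3 * h

theorem isCurvePoint_rep_mk_iff {a b : K} {v : Fin 3 → K} (hv : v ≠ 0) :
    IsCurvePoint a b (Projectivization.mk K v hv).rep ↔ IsCurvePoint a b v := by
  obtain ⟨c, hc⟩ := Projectivization.exists_smul_eq_mk_rep K v hv
  rw [← hc, Units.smul_def, isCurvePoint_smul_iff c.ne_zero]

/-- The point `[x : y : 1]` of the projective plane. -/
def affinePoint (P : K × K) : Projectivization K (Fin 3 → K) :=
  Projectivization.mk K ![P.1, P.2, 1] fun h ↦ one_ne_zero (congrFun h 2)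

variable (K) in
/-- The point `[0 : 1 : 0]` of the projective plane. -/
def pointAtInfinity : Projectivization K (Fin 3 → K) :=
  Projectivization.mk K ![0, 1, 0] fun h ↦ one_ne_zero (congrFun h 1)

theorem affinePoint_injective : Function.Injective (affinePoint (K := K)) := by
  rintro ⟨x, y⟩ ⟨x', y'⟩ h
  obtain ⟨c, hc⟩ := (Projectivization.mk_eq_mk_iff' ..).1 h
  obtain rfl : c = 1 := by simpa using congrFun hc 2
  exact Prod.ext (by simpa using (congrFun hc 0).symm) (by simpa using (congrFun hc 1).symm)

theorem affinePoint_ne_pointAtInfinity (P : K × K) : affinePoint P ≠ pointAtInfinity K := by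
  intro h
  obtain ⟨c, hc⟩ := (Projectivization.mk_eq_mk_iff' ..).1 h
  simpa using congrFun hc 2

theorem mk_eq_affinePoint {v : Fin 3 → K} (hv : v ≠ 0) (hz : v 2 ≠ 0) :
    Projectivization.mk K v hv = affinePoint (v 0 / v 2, v 1 / v 2) := by
  refine (Projectivization.mk_eq_mk_iff' ..).2 ⟨v 2, ?_⟩
  ext i
  fin_cases i <;> simp <;> field_simp

theorem mk_eq_pointAtInfinity {v : Fin 3 → K} (hv : v ≠ 0) (hx : v 0 = 0) (hz : v 2 = 0) :
    Projectivization.mk K v hv = pointAtInfinity K := by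
  refine (Projectivization.mk_eq_mk_iff' ..).2 ⟨v 1, ?_⟩
  ext i
  fin_cases i <;> simp [hx, hz]

theorem isCurvePoint_rep_affinePoint_iff {a b : K} {P : K × K} :
    IsCurvePoint a b (affinePoint P).rep ↔ P.2 ^ 2 = P.1 ^ 3 + a * P.1 + b := by
  rw [affinePoint, isCurvePoint_rep_mk_iff]
  simp [IsCurvePoint]

theorem setOf_isCurvePoint_rep_eq (a b : K) :
    {P : Projectivization K (Fin 3 → K) | IsCurvePoint a b P.rep} =
      insert (pointAtInfinity K) (affinePoint '' {P | P.2 ^ 2 = P.1 ^ 3 + a * P.1 + b}) := by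
  ext P
  constructor
  · induction P using Projectivization.ind with
    | h v hv =>
      intro h
      rcases eq_or_ne (v 2) 0 with hz | hz
      · have hv' : IsCurvePoint a b v := (isCurvePoint_rep_mk_iff hv).1 h
        have hx : v 0 = 0 := by simpa [hz] using Eq.symm hv'
        exact Or.inl (mk_eq_pointAtInfinity hv hx hz)
      · rw [mk_eq_affinePoint hv hz] at h ⊢
        exact Or.inr ⟨_, isCurvePoint_rep_affinePoint_iff.1 h, rfl⟩
  · rintro (rfl | ⟨Q, hQ, rfl⟩)
    · exact (isCurvePoint_rep_mk_iff _).2 (by simp [IsCurvePoint])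
    · exact isCurvePoint_rep_affinePoint_iff.2 hQ

theorem ncard_setOf_isCurvePoint_rep [Fintype K] [DecidableEq K] (a b : K) :
    {P : Projectivization K (Fin 3 → K) | IsCurvePoint a b P.rep}.ncard =
      #{P : K × K | P.2 ^ 2 = P.1 ^ 3 + a * P.1 + b} + 1 := by
  have hnot : pointAtInfinity K ∉ affinePoint '' {P : K × K | P.2 ^ 2 = P.1 ^ 3 + a * P.1 + b} :=
    fun ⟨P, _, hP⟩ ↦ affinePoint_ne_pointAtInfinity P hP
  rw [setOf_isCurvePoint_rep_eq, Set.ncard_insert_of_notMem hnot,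
    Set.ncard_image_of_injective _ affinePoint_injective, ← Set.ncard_coe_finset, coe_filter_univ]

end PointCount

section FrobeniusTrace

open Finset
open scoped BigOperators

variable {F : Type*} [Field F] [Fintype F] [DecidableEq F]

/-- The trace of Frobenius of `y² = x³ + ax + b`, as a character sum. -/
def frobTrace (a b : F) : ℤ := -∑ x, quadraticChar F (x ^ 3 + a * x + b)

theorem card_affine_points (hF : ringChar F ≠ 2) (a b : F) :
    (#{P : F × F | P.2 ^ 2 = P.1 ^ 3 + a * P.1 + b} : ℤ) = Fintype.card F - frobTrace a b := by
  calc (#{P : F × F | P.2 ^ 2 = P.1 ^ 3 + a * P.1 + b} : ℤ)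
      = ∑ x : F, (#{y : F | y ^ 2 = x ^ 3 + a * x + b} : ℤ) := by
        simp only [card_filter, Fintype.sum_prod_type, Nat.cast_sum]
    _ = ∑ x : F, (quadraticChar F (x ^ 3 + a * x + b) + 1) :=
        sum_congr rfl fun x _ ↦ by rw [← quadraticChar_card_sqrts hF, Set.toFinset_ofPred]
    _ = Fintype.card F - frobTrace a b := by
        rw [sum_add_distrib, frobTrace, sum_const, card_univ, nsmul_one]
        ring

theorem quadraticChar_pow_three (x : F) : quadraticChar F (x ^ 3) = quadraticChar F x := by
  rw [map_pow]
  rcases quadraticChar_isQuadratic F x with h | h | h <;> rw [h] <;> rfl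

theorem frobTrace_zero_zero (hF : ringChar F ≠ 2) : frobTrace (0 : F) 0 = 0 := by
  simp only [frobTrace, zero_mul, add_zero, quadraticChar_pow_three, quadraticChar_sum_zero hF,
    neg_zero]

theorem frobTrace_twist {u : F} (hu : u ≠ 0) (a b : F) :
    frobTrace (u ^ 2 * a) (u ^ 3 * b) = quadraticChar F u * frobTrace a b := by
  rw [frobTrace, frobTrace, ← Equiv.sum_comp (Equiv.mulLeft₀ u hu), mul_neg, mul_sum]
  refine congrArg Neg.neg (sum_congr rfl fun x _ ↦ ?_)
  rw [← quadraticChar_pow_three u, ← map_mul, Equiv.mulLeft₀_apply]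
  ring_nf

theorem sum_quadraticChar_mul_self :
    ∑ b : F, quadraticChar F b * quadraticChar F b = Fintype.card F - 1 := by
  have h (b : F) : quadraticChar F b * quadraticChar F b = 1 - if b = 0 then 1 else 0 := by
    split_ifs with hb
    · simp [hb]
    · rw [← pow_two, quadraticChar_sq_one hb, sub_zero]
  simp only [h, sum_sub_distrib, sum_const, card_univ, nsmul_one, sum_ite_eq', mem_univ, if_true]

theorem sum_quadraticChar_add_mul (hF : ringChar F ≠ 2) (c : F) {m : F} (hm : m ≠ 0) :
    ∑ a : F, quadraticChar F (c + a * m) = 0 := by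
  rw [← quadraticChar_sum_zero hF]
  exact Equiv.sum_comp ((Equiv.mulRight₀ m hm).trans (Equiv.addLeft c)) (quadraticChar F)

theorem sum_sum_quadraticChar_mul_quadraticChar (hF : ringChar F ≠ 2) (x y : F) :
    ∑ a : F, ∑ b : F, quadraticChar F (x ^ 3 + a * x + b) * quadraticChar F (y ^ 3 + a * y + b) =
      if x = y then (Fintype.card F : ℤ) * (Fintype.card F - 1) else 0 := by
  have hshift (a : F) :
      ∑ b : F, quadraticChar F (x ^ 3 + a * x + b) * quadraticChar F (y ^ 3 + a * y + b) =
        ∑ b : F, quadraticChar F b * quadraticChar F (b + (y ^ 3 - x ^ 3) + a * (y - x)) := by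
    rw [← Equiv.sum_comp (Equiv.subRight (x ^ 3 + a * x))]
    refine sum_congr rfl fun b _ ↦ ?_
    rw [Equiv.subRight_apply]
    ring_nf
  simp only [hshift]
  split_ifs with hxy
  · simp only [hxy, sub_self, mul_zero, add_zero, sum_quadraticChar_mul_self, sum_const, card_univ,
      nsmul_eq_mul]
  · rw [sum_comm]
    refine sum_eq_zero fun b _ ↦ ?_
    rw [← mul_sum, sum_quadraticChar_add_mul hF _ (sub_ne_zero.2 (Ne.symm hxy)), mul_zero]

theorem sum_sum_frobTrace_sq (hF : ringChar F ≠ 2) :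
    ∑ a : F, ∑ b : F, frobTrace a b ^ 2 = (Fintype.card F : ℤ) ^ 2 * (Fintype.card F - 1) := by
  let g (ab xy : F × F) : ℤ := quadraticChar F (xy.1 ^ 3 + ab.1 * xy.1 + ab.2) *
    quadraticChar F (xy.2 ^ 3 + ab.1 * xy.2 + ab.2)
  calc ∑ a : F, ∑ b : F, frobTrace a b ^ 2 = ∑ ab, ∑ xy, g ab xy := by
        simp only [Fintype.sum_prod_type, frobTrace, pow_two, neg_mul_neg, sum_mul_sum, g]
    _ = ∑ xy, ∑ ab, g ab xy := sum_comm
    _ = (Fintype.card F : ℤ) ^ 2 * (Fintype.card F - 1) := by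
        simp only [Fintype.sum_prod_type, g, sum_sum_quadraticChar_mul_quadraticChar hF,
          sum_ite_eq, mem_univ, if_true, sum_const, card_univ, nsmul_eq_mul]
        ring

end FrobeniusTrace

section LocalCoefficient

open Finset
open scoped BigOperators

variable {F : Type*} [Field F] [Fintype F] [DecidableEq F]

/-- The normalized Dirichlet coefficient `λ(q ^ e)`, `e ∈ {1, 2}`, of the reduced curve
`y² = x³ + ax + b` over the field with `q` elements; any `e ≠ 2` is treated as `e = 1`. -/
noncomputable def localCoeff (e : ℕ) (a b : F) : ℝ :=
  if e = 2 then
    (if 4 * a ^ 3 + 27 * b ^ 2 = 0 then (frobTrace a b / √(Fintype.card F : ℝ)) ^ 2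
      else (frobTrace a b / √(Fintype.card F : ℝ)) ^ 2 - 1)
  else frobTrace a b / √(Fintype.card F : ℝ)

theorem localCoeff_one (a b : F) : localCoeff 1 a b = frobTrace a b / √(Fintype.card F : ℝ) := rfl

theorem localCoeff_two (a b : F) :
    localCoeff 2 a b = localCoeff 1 a b ^ 2 - 1 + if 4 * a ^ 3 + 27 * b ^ 2 = 0 then 1 else 0 := by
  simp only [localCoeff, if_true, OfNat.one_ne_ofNat, if_false]
  split_ifs <;> ring

theorem localCoeff_zero_zero (hF : ringChar F ≠ 2) (e : ℕ) : localCoeff e (0 : F) 0 = 0 := by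
  simp [localCoeff, frobTrace_zero_zero hF]

theorem localCoeff_scale (e : ℕ) {d : F} (hd : d ≠ 0) (a b : F) :
    localCoeff e (d ^ 4 * a) (d ^ 6 * b) = localCoeff e a b := by
  have htrace : frobTrace (d ^ 4 * a) (d ^ 6 * b) = frobTrace a b := by
    have h := frobTrace_twist (pow_ne_zero 2 hd) a b
    rwa [quadraticChar_sq_one' hd, one_mul, ← pow_mul, ← pow_mul] at h
  have hdisc : 4 * (d ^ 4 * a) ^ 3 + 27 * (d ^ 6 * b) ^ 2 = 0 ↔ 4 * a ^ 3 + 27 * b ^ 2 = 0 := by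
    rw [show 4 * (d ^ 4 * a) ^ 3 + 27 * (d ^ 6 * b) ^ 2 = d ^ 12 * (4 * a ^ 3 + 27 * b ^ 2) by ring,
      mul_eq_zero, or_iff_right (pow_ne_zero 12 hd)]
  simp only [localCoeff, htrace, hdisc]

-- The quadratic twist by a nonresidue `u` changes the sign of the trace.
theorem expect_localCoeff_one_pow_of_odd (hF : ringChar F ≠ 2) {r : ℕ} (hr : Odd r) :
    𝔼 a : F, 𝔼 b : F, localCoeff 1 a b ^ r = 0 := by
  obtain ⟨u, hu⟩ := quadraticChar_exists_neg_one hF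
  have hu0 : u ≠ 0 := by rintro rfl; simp at hu
  have htwist (a b : F) : localCoeff 1 (u ^ 2 * a) (u ^ 3 * b) = -localCoeff 1 a b := by
    rw [localCoeff_one, frobTrace_twist hu0, hu, localCoeff_one]
    push_cast
    ring
  have hneg : 𝔼 a : F, 𝔼 b : F, localCoeff 1 a b ^ r =
      -𝔼 a : F, 𝔼 b : F, localCoeff 1 a b ^ r := calc
    _ = 𝔼 a : F, 𝔼 b : F, localCoeff 1 (u ^ 2 * a) (u ^ 3 * b) ^ r := by
      rw [← Fintype.expect_equiv (Equiv.mulLeft₀ (u ^ 2) (pow_ne_zero 2 hu0)) _ _ fun _ ↦ rfl]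
      refine expect_congr rfl fun a _ ↦ ?_
      exact (Fintype.expect_equiv (Equiv.mulLeft₀ (u ^ 3) (pow_ne_zero 3 hu0)) _ _
        fun _ ↦ rfl).symm
    _ = _ := by simp only [htwist, hr.neg_pow, expect_neg_distrib]
  linarith

theorem expect_localCoeff_one_sq (hF : ringChar F ≠ 2) :
    𝔼 a : F, 𝔼 b : F, localCoeff 1 a b ^ 2 = 1 - 1 / Fintype.card F := by
  have hq : (Fintype.card F : ℝ) ≠ 0 := Nat.cast_ne_zero.2 Fintype.card_ne_zero
  have hsum : ∑ a : F, ∑ b : F, (frobTrace a b : ℝ) ^ 2 =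
      (Fintype.card F : ℝ) ^ 2 * (Fintype.card F - 1) := by
    exact_mod_cast sum_sum_frobTrace_sq hF
  simp only [localCoeff_one, div_pow, Real.sq_sqrt (Nat.cast_nonneg _),
    Fintype.expect_eq_sum_div_card, ← sum_div, hsum]
  field_simp

theorem card_singular_le (h2 : (2 : F) ≠ 0) (h3 : (3 : F) ≠ 0) :
    #{ab : F × F | 4 * ab.1 ^ 3 + 27 * ab.2 ^ 2 = 0} ≤ Fintype.card F := by
  refine (card_le_card (t := univ.image fun t : F ↦ (-3 * t ^ 2, 2 * t ^ 3)) ?_).trans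
    card_image_le
  rintro ⟨a, b⟩ h
  replace h : 4 * a ^ 3 + 27 * b ^ 2 = 0 := by simpa using h
  simp only [mem_image, mem_univ, true_and, Prod.mk.injEq]
  rcases eq_or_ne a 0 with rfl | ha
  · have hb : 3 ^ 3 * b ^ 2 = 0 := by linear_combination h
    have hb0 : b = 0 := by simpa [h3] using hb
    exact ⟨0, by simp [hb0]⟩
  · refine ⟨-3 * b / (2 * a), ?_, ?_⟩ <;> field_simp
    · linear_combination -h
    · linear_combination -b * h

theorem abs_expect_localCoeff_two_le (h2 : (2 : F) ≠ 0) (h3 : (3 : F) ≠ 0) :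
    |𝔼 a : F, 𝔼 b : F, localCoeff 2 a b| ≤ 1 / Fintype.card F := by
  have hF : ringChar F ≠ 2 := fun h ↦ h2 <| by
    simpa [h] using ringChar.Nat.cast_ringChar (R := F)
  have hq : (0 : ℝ) < Fintype.card F := Nat.cast_pos.2 Fintype.card_pos
  set δ := 𝔼 a : F, 𝔼 b : F, if 4 * a ^ 3 + 27 * b ^ 2 = 0 then (1 : ℝ) else 0 with hδ
  have hδ0 : 0 ≤ δ := expect_nonneg fun a _ ↦ expect_nonneg fun b _ ↦ by split_ifs <;> norm_num
  have hδ1 : δ ≤ 1 / Fintype.card F := by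
    have hcard : (#{ab : F × F | 4 * ab.1 ^ 3 + 27 * ab.2 ^ 2 = 0} : ℝ) ≤ Fintype.card F := by
      exact_mod_cast card_singular_le h2 h3
    rw [card_filter, Fintype.sum_prod_type] at hcard
    push_cast at hcard
    simp only [hδ, Fintype.expect_eq_sum_div_card, ← sum_div, div_div]
    rw [div_le_div_iff₀ (by positivity) hq, one_mul]
    gcongr
  have hmean : 𝔼 a : F, 𝔼 b : F, localCoeff 2 a b = δ - 1 / Fintype.card F := by
    simp only [localCoeff_two, expect_add_distrib, expect_sub_distrib,
      expect_localCoeff_one_sq hF, Fintype.expect_const, hδ]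
    ring
  rw [hmean, abs_le]
  constructor <;> linarith

end LocalCoefficient

section ReductionModP

open Finset
open scoped BigOperators

variable {p : ℕ} [Fact p.Prime]

theorem zmod_natCast_ne_zero_of_lt {n : ℕ} (hn : 0 < n) (hnp : n < p) : (n : ZMod p) ≠ 0 := by
  rw [Ne, ZMod.natCast_eq_zero_iff]
  exact Nat.not_dvd_of_pos_of_lt hn hnp

theorem abs_localCoeff_le (hp : 5 ≤ p) (e : ℕ) (a b : ZMod p) : |localCoeff e a b| ≤ 2025 := by
  have hone : |localCoeff 1 a b| ≤ 45 := by
    have hsqrt : 0 < √(p : ℝ) := Real.sqrt_pos.2 (by exact_mod_cast (by omega : 0 < p))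
    rw [localCoeff_one, ZMod.card, abs_div, abs_of_pos hsqrt, div_le_iff₀ hsqrt, frobTrace]
    simpa only [Int.cast_neg, abs_neg] using abs_sum_quadraticChar_cubic_le hp a b
  have hsq : localCoeff 1 a b ^ 2 ≤ 45 ^ 2 := sq_le_sq' (neg_le_of_abs_le hone) (le_of_abs_le hone)
  have hnonneg := sq_nonneg (localCoeff 1 a b)
  rcases eq_or_ne e 2 with rfl | he
  · rw [localCoeff_two, abs_le]
    split_ifs <;> constructor <;> linarith
  · rw [show localCoeff e a b = localCoeff 1 a b by simp [localCoeff, he]]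
    linarith

theorem apFrob_eq_frobTrace (hp : 5 ≤ p) (A B : ℤ) :
    apFrob p Fact.out A B = frobTrace (A : ZMod p) B := by
  have hN : Np p Fact.out A B = _ := ncard_setOf_isCurvePoint_rep (A : ZMod p) B
  have hcard := card_affine_points (ringChar_zmod_ne_two hp) (A : ZMod p) B
  rw [ZMod.card] at hcard
  rw [apFrob, hN]
  push_cast
  linarith

theorem lamPow_eq_localCoeff (hp : 5 ≤ p) (A B : ℤ) (e : ℕ) :
    lamPow p Fact.out A B e = localCoeff e (A : ZMod p) B := by
  have hdvd : (p : ℤ) ∣ 4 * A ^ 3 + 27 * B ^ 2 ↔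
      4 * (A : ZMod p) ^ 3 + 27 * (B : ZMod p) ^ 2 = 0 := by
    rw [← ZMod.intCast_zmod_eq_zero_iff_dvd]
    push_cast
    rfl
  simp only [lamPow, localCoeff, apFrob_eq_frobTrace hp, hdvd, ZMod.card]

end ReductionModP

section Equidistribution

open Finset
open scoped BigOperators

variable {n : ℕ} [NeZero n]

theorem abs_card_Ioc_filter_intCast_eq_sub_le {a b : ℤ} (hab : a ≤ b) (z : ZMod n) :
    |(#{x ∈ Ioc a b | ((x : ℤ) : ZMod n) = z} : ℝ) - (b - a) / n| ≤ 1 := by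
  obtain ⟨v, rfl⟩ := ZMod.intCast_surjective z
  have hn : (0 : ℚ) < n := by exact_mod_cast NeZero.pos n
  have hcard := Int.Ioc_filter_modEq_card a b (Int.natCast_pos.2 (NeZero.pos n)) v
  have hmono : ⌊((a - v) / n : ℚ)⌋ ≤ ⌊((b - v) / n : ℚ)⌋ := Int.floor_mono (by gcongr)
  simp only [← ZMod.intCast_eq_intCast_iff, Int.cast_natCast,
    max_eq_left (sub_nonneg.2 hmono)] at hcard
  have hlen : ((b - a) / n : ℚ) = (b - v) / n - (a - v) / n := by ring
  have hrat : |(#{x ∈ Ioc a b | ((x : ℤ) : ZMod n) = v} : ℚ) - (b - a) / n| ≤ 1 := by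
    rw [← Int.cast_natCast (R := ℚ), hcard, Int.cast_sub, hlen, abs_le]
    constructor <;>
      linarith [Int.floor_le ((a - v) / n : ℚ), Int.lt_floor_add_one ((a - v) / n : ℚ),
        Int.floor_le ((b - v) / n : ℚ), Int.lt_floor_add_one ((b - v) / n : ℚ)]
  exact_mod_cast hrat

theorem abs_sum_Ioc_intCast_sub_le (H : ZMod n → ℝ) {K : ℝ} (hK : ∀ z, |H z| ≤ K)
    {a b : ℤ} (hab : a ≤ b) :
    |∑ x ∈ Ioc a b, H x - (b - a) * 𝔼 z, H z| ≤ n * K := by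
  have hsum : ∑ x ∈ Ioc a b, H x - (b - a) * 𝔼 z, H z =
      ∑ z : ZMod n, ((#{x ∈ Ioc a b | ((x : ℤ) : ZMod n) = z} : ℝ) - (b - a) / n) * H z := by
    rw [← sum_fiberwise_of_maps_to (g := fun x : ℤ ↦ (x : ZMod n)) fun _ _ ↦ mem_univ _,
      Fintype.expect_eq_sum_div_card, ZMod.card, mul_div_assoc', mul_sum, sum_div,
      ← sum_sub_distrib]
    refine sum_congr rfl fun z _ ↦ ?_
    rw [sum_congr rfl fun x hx ↦ congrArg H (mem_filter.1 hx).2, sum_const, nsmul_eq_mul]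
    ring
  calc _ ≤ ∑ z : ZMod n, |((#{x ∈ Ioc a b | ((x : ℤ) : ZMod n) = z} : ℝ) - (b - a) / n) * H z| :=
        hsum ▸ abs_sum_le_sum_abs _ _
    _ ≤ ∑ _z : ZMod n, K := by
        refine sum_le_sum fun z _ ↦ ?_
        rw [abs_mul]
        exact (mul_le_of_le_one_left (abs_nonneg _)
          (abs_card_Ioc_filter_intCast_eq_sub_le hab z)).trans (hK z)
    _ = n * K := by simp

theorem abs_sum_Ioc_sum_Ioc_intCast_sub_le (G : ZMod n → ZMod n → ℝ) {K : ℝ}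
    (hK : ∀ a b, |G a b| ≤ K) {a b c d : ℤ} (hab : a ≤ b) (hcd : c ≤ d) :
    |∑ x ∈ Ioc a b, ∑ y ∈ Ioc c d, G x y - (b - a) * (d - c) * 𝔼 x, 𝔼 y, G x y| ≤
      n * K * ((b - a) + (d - c)) := by
  have hlen' : (0 : ℝ) ≤ d - c := by exact_mod_cast sub_nonneg.2 hcd
  have hinner : |∑ x ∈ Ioc a b, (∑ y ∈ Ioc c d, G x y - (d - c) * 𝔼 y, G x y)| ≤
      (b - a) * (n * K) := by
    calc _ ≤ ∑ _x ∈ Ioc a b, (n : ℝ) * K := (abs_sum_le_sum_abs _ _).trans <|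
          sum_le_sum fun x _ ↦ abs_sum_Ioc_intCast_sub_le (G x) (hK x) hcd
      _ = (b - a) * (n * K) := by
          rw [sum_const, Int.card_Ioc, nsmul_eq_mul, ← Int.cast_natCast,
            Int.toNat_of_nonneg (sub_nonneg.2 hab), Int.cast_sub]
  have houter : |∑ x ∈ Ioc a b, 𝔼 y, G x y - (b - a) * 𝔼 x, 𝔼 y, G x y| ≤ n * K :=
    abs_sum_Ioc_intCast_sub_le (fun x ↦ 𝔼 y, G x y)
      (fun x ↦ (abs_expect_le _ _).trans (expect_le univ_nonempty fun y _ ↦ hK x y)) hab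
  rw [sum_sub_distrib, ← mul_sum] at hinner
  have hsplit : ∑ x ∈ Ioc a b, ∑ y ∈ Ioc c d, G x y - (b - a) * (d - c) * 𝔼 x, 𝔼 y, G x y =
      (∑ x ∈ Ioc a b, ∑ y ∈ Ioc c d, G x y - (d - c) * ∑ x ∈ Ioc a b, 𝔼 y, G x y) +
      (d - c) * (∑ x ∈ Ioc a b, 𝔼 y, G x y - (b - a) * 𝔼 x, 𝔼 y, G x y) := by ring
  calc _ ≤ (b - a) * (n * K) + (d - c) * (n * K) := by
        rw [hsplit]
        refine (abs_add_le _ _).trans (add_le_add hinner ?_)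
        rw [abs_mul, abs_of_nonneg hlen']
        exact mul_le_mul_of_nonneg_left houter hlen'
    _ = n * K * ((b - a) + (d - c)) := by ring

end Equidistribution

section HeightBox

open Finset
open scoped BigOperators

/-- The nonzero integer pairs `(A, B)` with `|A| ≤ x⁴` and `|B| ≤ x⁶`, i.e. of naive height at most
`x¹²`. The origin is left out because every `d` satisfies `d⁴ ∣ 0` and `d⁶ ∣ 0`. -/
noncomputable def heightBox (x : ℝ) : Finset (ℤ × ℤ) :=
  (Icc (-⌊x ^ 4⌋) ⌊x ^ 4⌋ ×ˢ Icc (-⌊x ^ 6⌋) ⌊x ^ 6⌋).erase 0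

theorem mem_heightBox {x : ℝ} {AB : ℤ × ℤ} :
    AB ∈ heightBox x ↔ AB ≠ 0 ∧ |(AB.1 : ℝ)| ≤ x ^ 4 ∧ |(AB.2 : ℝ)| ≤ x ^ 6 := by
  simp only [heightBox, mem_erase, mem_product, mem_Icc, neg_le, Int.le_floor, Int.cast_neg,
    abs_le']
  tauto

theorem card_Icc_neg_floor_floor {y : ℝ} (hy : 0 ≤ y) : #(Icc (-⌊y⌋) ⌊y⌋) = (2 * ⌊y⌋ + 1 : ℝ) := by
  have hfloor := Int.floor_nonneg.2 hy
  rw [Int.card_Icc, ← Int.cast_natCast, Int.toNat_of_nonneg (by linarith)]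
  push_cast
  ring

theorem two_mul_floor_add_one_le {y : ℝ} (hy : 1 ≤ y) : (2 * ⌊y⌋ + 1 : ℝ) ≤ 3 * y := by
  linarith [Int.floor_le y]

theorem card_heightBox_le {x : ℝ} (hx : 1 ≤ x) : (#(heightBox x) : ℝ) ≤ 9 * x ^ 10 := by
  have hcard : ∀ k : ℕ, (#(Icc (-⌊x ^ k⌋) ⌊x ^ k⌋) : ℝ) ≤ 3 * x ^ k := fun k ↦
    (card_Icc_neg_floor_floor (by positivity)).trans_le (two_mul_floor_add_one_le (one_le_pow₀ hx))
  calc (#(heightBox x) : ℝ)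
      ≤ #(Icc (-⌊x ^ 4⌋) ⌊x ^ 4⌋) * #(Icc (-⌊x ^ 6⌋) ⌊x ^ 6⌋) := by
        exact_mod_cast (card_le_card (erase_subset _ _)).trans_eq (card_product _ _)
    _ ≤ 3 * x ^ 4 * (3 * x ^ 6) := mul_le_mul (hcard 4) (hcard 6) (by positivity) (by positivity)
    _ = 9 * x ^ 10 := by ring

variable {n : ℕ} [NeZero n] {G : ZMod n → ZMod n → ℝ} {K m : ℝ}

theorem abs_sum_Icc_sum_Icc_le (hK : ∀ a b, |G a b| ≤ K) (hm : |𝔼 a, 𝔼 b, G a b| ≤ m) {y z : ℝ}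
    (hy : 1 ≤ y) (hz : 1 ≤ z) :
    |∑ A ∈ Icc (-⌊y⌋) ⌊y⌋, ∑ B ∈ Icc (-⌊z⌋) ⌊z⌋, G A B| ≤
      9 * m * (y * z) + 3 * n * K * (y + z) := by
  have hK0 : 0 ≤ K := (abs_nonneg _).trans (hK 0 0)
  have hy0 : 0 ≤ ⌊y⌋ := Int.floor_nonneg.2 (by linarith)
  have hz0 : 0 ≤ ⌊z⌋ := Int.floor_nonneg.2 (by linarith)
  have hIcc : ∀ t : ℤ, Icc (-t) t = Ioc (-t - 1) t := fun t ↦ by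
    ext
    simp only [mem_Icc, mem_Ioc]
    omega
  have hlen : ∀ t : ℤ, (t : ℝ) - (-t - 1 : ℤ) = 2 * t + 1 := fun t ↦ by push_cast; ring
  have hequi := abs_sum_Ioc_sum_Ioc_intCast_sub_le G hK
    (by omega : -⌊y⌋ - 1 ≤ ⌊y⌋) (by omega : -⌊z⌋ - 1 ≤ ⌊z⌋)
  rw [← hIcc, ← hIcc, hlen, hlen] at hequi
  have hM0 : (0 : ℝ) ≤ 2 * ⌊y⌋ + 1 := by exact_mod_cast (by omega : 0 ≤ 2 * ⌊y⌋ + 1)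
  have hN0 : (0 : ℝ) ≤ 2 * ⌊z⌋ + 1 := by exact_mod_cast (by omega : 0 ≤ 2 * ⌊z⌋ + 1)
  have hM := two_mul_floor_add_one_le hy
  have hN := two_mul_floor_add_one_le hz
  set M : ℝ := 2 * ⌊y⌋ + 1
  set N : ℝ := 2 * ⌊z⌋ + 1
  calc _ ≤ |M * N * 𝔼 a, 𝔼 b, G a b| + n * K * (M + N) := by
        linarith [abs_sub_abs_le_abs_sub (∑ A ∈ Icc (-⌊y⌋) ⌊y⌋, ∑ B ∈ Icc (-⌊z⌋) ⌊z⌋, G A B)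
          (M * N * 𝔼 a, 𝔼 b, G a b)]
    _ ≤ 3 * y * (3 * z) * m + n * K * (3 * y + 3 * z) := by
        rw [abs_mul, abs_of_nonneg (mul_nonneg hM0 hN0)]
        gcongr
    _ = _ := by ring

theorem abs_sum_heightBox_le (hK : ∀ a b, |G a b| ≤ K) (hm : |𝔼 a, 𝔼 b, G a b| ≤ m) {x : ℝ}
    (hx : 1 ≤ x) :
    |∑ AB ∈ heightBox x, G AB.1 AB.2| ≤ 9 * m * x ^ 10 + 7 * n * K * x ^ 6 := by
  have hK0 : 0 ≤ K := (abs_nonneg _).trans (hK 0 0)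
  have hn : (1 : ℝ) ≤ n := by exact_mod_cast NeZero.one_le
  have hfloor : ∀ k : ℕ, 0 ≤ ⌊x ^ k⌋ := fun k ↦ Int.floor_nonneg.2 (by positivity)
  have hzero : (0 : ℤ × ℤ) ∈ Icc (-⌊x ^ 4⌋) ⌊x ^ 4⌋ ×ˢ Icc (-⌊x ^ 6⌋) ⌊x ^ 6⌋ := by
    simp [hfloor]
  have hrect := abs_sum_Icc_sum_Icc_le hK hm (one_le_pow₀ (n := 4) hx) (one_le_pow₀ (n := 6) hx)
  rw [← sum_product (f := fun AB ↦ G (AB.1 : ℤ) (AB.2 : ℤ))] at hrect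
  have hpow : x ^ 4 ≤ x ^ 6 := pow_le_pow_right₀ hx (by norm_num)
  have hpow6 : 1 ≤ x ^ 6 := one_le_pow₀ hx
  rw [heightBox, sum_erase_eq_sub hzero]
  calc _ ≤ 9 * m * (x ^ 4 * x ^ 6) + 3 * n * K * (x ^ 4 + x ^ 6) + K :=
        (abs_sub _ _).trans (add_le_add hrect (hK _ _))
    _ ≤ 9 * m * (x ^ 4 * x ^ 6) + 3 * n * K * (x ^ 6 + x ^ 6) + 1 * K * 1 := by
        rw [one_mul, mul_one]
        gcongr
    _ ≤ 9 * m * (x ^ 4 * x ^ 6) + 3 * n * K * (x ^ 6 + x ^ 6) + n * K * x ^ 6 := by gcongr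
    _ = _ := by ring

end HeightBox

section MoebiusSieve

open Finset
open scoped ArithmeticFunction.Moebius

theorem dvd_floorRoot_gcd_iff {A B : ℤ} {d : ℕ} :
    d ∣ Nat.floorRoot 12 (Int.gcd (A ^ 3) (B ^ 2)) ↔ (d : ℤ) ^ 4 ∣ A ∧ (d : ℤ) ^ 6 ∣ B := by
  rw [← Nat.pow_dvd_iff_dvd_floorRoot, Int.gcd_eq_natAbs, Nat.dvd_gcd_iff, Int.natAbs_pow,
    Int.natAbs_pow, show d ^ 12 = (d ^ 4) ^ 3 by ring, Nat.pow_dvd_pow_iff three_ne_zero,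
    show (d ^ 4) ^ 3 = (d ^ 6) ^ 2 by ring, Nat.pow_dvd_pow_iff two_ne_zero]
  simp only [← Int.natCast_dvd, Nat.cast_pow]

theorem condM_iff_floorRoot_gcd_eq_one {A B : ℤ} :
    CondM A B ↔ Nat.floorRoot 12 (Int.gcd (A ^ 3) (B ^ 2)) = 1 := by
  simp only [Nat.eq_one_iff_not_exists_prime_dvd, dvd_floorRoot_gcd_iff, CondM, not_and]

theorem le_of_pow_dvd_of_abs_le {d k : ℕ} (hk : k ≠ 0) {A : ℤ} (hA : A ≠ 0) {x : ℝ} (hx : 0 ≤ x)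
    (hdvd : (d : ℤ) ^ k ∣ A) (hle : |(A : ℝ)| ≤ x ^ k) : (d : ℝ) ≤ x := by
  have habs : (d : ℤ) ^ k ≤ |A| := Int.le_of_dvd (abs_pos.2 hA) ((dvd_abs _ _).2 hdvd)
  refine le_of_pow_le_pow_left₀ hk hx (le_trans ?_ hle)
  exact_mod_cast habs

theorem sum_moebius_eq_ite_condM {x : ℝ} (hx : 0 ≤ x) {AB : ℤ × ℤ} (hAB : AB ∈ heightBox x)
    [Decidable (CondM AB.1 AB.2)] :
    ∑ d ∈ Icc 1 ⌊x⌋₊ with ((d : ℕ) : ℤ) ^ 4 ∣ AB.1 ∧ (d : ℤ) ^ 6 ∣ AB.2, μ d =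
      if CondM AB.1 AB.2 then 1 else 0 := by
  obtain ⟨hne, hA, hB⟩ := mem_heightBox.1 hAB
  set L := Nat.floorRoot 12 (Int.gcd (AB.1 ^ 3) (AB.2 ^ 2)) with hL
  have hL0 : L ≠ 0 := by
    rw [hL, Nat.floorRoot_ne_zero]
    refine ⟨by norm_num, fun h ↦ hne ?_⟩
    simpa [Int.gcd_eq_zero_iff, Prod.ext_iff] using h
  have hdivisors :
      {d ∈ Icc 1 ⌊x⌋₊ | ((d : ℕ) : ℤ) ^ 4 ∣ AB.1 ∧ (d : ℤ) ^ 6 ∣ AB.2} = L.divisors := by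
    ext d
    rw [mem_filter, mem_Icc, Nat.mem_divisors, dvd_floorRoot_gcd_iff, Nat.le_floor_iff hx]
    refine ⟨fun h ↦ ⟨h.2, hL0⟩, fun h ↦ ⟨⟨?_, ?_⟩, h.1⟩⟩
    · exact Nat.pos_of_dvd_of_pos (dvd_floorRoot_gcd_iff.2 h.1) (Nat.pos_of_ne_zero hL0)
    · rcases eq_or_ne AB.1 0 with hA0 | hA0
      · have hB0 : AB.2 ≠ 0 := fun hB0 ↦ hne (Prod.ext hA0 hB0)
        exact le_of_pow_dvd_of_abs_le (by norm_num) hB0 hx h.1.2 hB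
      · exact le_of_pow_dvd_of_abs_le (by norm_num) hA0 hx h.1.1 hA
  rw [hdivisors, ← ArithmeticFunction.coe_mul_zeta_apply, ArithmeticFunction.moebius_mul_coe_zeta,
    ArithmeticFunction.one_apply]
  simp only [condM_iff_floorRoot_gcd_eq_one, hL]

theorem scale_mem_heightBox_iff {d : ℕ} (hd : 0 < d) {x : ℝ} {A B : ℤ} :
    ((d : ℤ) ^ 4 * A, (d : ℤ) ^ 6 * B) ∈ heightBox x ↔ (A, B) ∈ heightBox (x / d) := by
  have hd' : (0 : ℝ) < d := by exact_mod_cast hd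
  have hscale : ∀ (k : ℕ) (C : ℤ), |(((d : ℤ) ^ k * C : ℤ) : ℝ)| ≤ x ^ k ↔
      |(C : ℝ)| ≤ (x / d) ^ k := fun k C ↦ by
    rw [div_pow, le_div_iff₀ (pow_pos hd' k)]
    simp [abs_mul, mul_comm]
  simp only [mem_heightBox, hscale]
  simp [Prod.ext_iff, hd.ne']

theorem sum_heightBox_filter_dvd (g : ℤ → ℤ → ℝ) {d : ℕ} (hd : 0 < d) (x : ℝ) :
    ∑ AB ∈ heightBox x with (d : ℤ) ^ 4 ∣ AB.1 ∧ (d : ℤ) ^ 6 ∣ AB.2, g AB.1 AB.2 =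
      ∑ AB ∈ heightBox (x / d), g (d ^ 4 * AB.1) (d ^ 6 * AB.2) := by
  symm
  refine sum_bij (fun AB _ ↦ ((d : ℤ) ^ 4 * AB.1, (d : ℤ) ^ 6 * AB.2)) (fun AB hAB ↦ ?_)
    (fun AB _ CD _ h ↦ ?_) (fun AB hAB ↦ ?_) fun _ _ ↦ rfl
  · exact mem_filter.2 ⟨(scale_mem_heightBox_iff hd).2 hAB, dvd_mul_right _ _, dvd_mul_right _ _⟩
  · simpa [hd.ne', Prod.ext_iff] using h
  · obtain ⟨A, B⟩ := AB
    obtain ⟨hbox, ⟨A, rfl⟩, ⟨B, rfl⟩⟩ := mem_filter.1 hAB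
    exact ⟨(A, B), (scale_mem_heightBox_iff hd).1 hbox, rfl⟩

open Classical in
theorem sum_heightBox_filter_condM (g : ℤ → ℤ → ℝ) {x : ℝ} (hx : 0 ≤ x) :
    ∑ AB ∈ heightBox x with CondM AB.1 AB.2, g AB.1 AB.2 =
      ∑ d ∈ Icc 1 ⌊x⌋₊, μ d *
        ∑ AB ∈ heightBox (x / d), g (d ^ 4 * AB.1) (d ^ 6 * AB.2) := by
  calc ∑ AB ∈ heightBox x with CondM AB.1 AB.2, g AB.1 AB.2
      = ∑ AB ∈ heightBox x, ∑ d ∈ Icc 1 ⌊x⌋₊ with ((d : ℕ) : ℤ) ^ 4 ∣ AB.1 ∧ (d : ℤ) ^ 6 ∣ AB.2,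
          (μ d : ℝ) * g AB.1 AB.2 := by
        rw [sum_filter]
        refine sum_congr rfl fun AB hAB ↦ ?_
        rw [← sum_mul, ← Int.cast_sum, sum_moebius_eq_ite_condM hx hAB]
        split_ifs <;> simp
    _ = ∑ d ∈ Icc 1 ⌊x⌋₊, ∑ AB ∈ heightBox x with (d : ℤ) ^ 4 ∣ AB.1 ∧ (d : ℤ) ^ 6 ∣ AB.2,
          (μ d : ℝ) * g AB.1 AB.2 := by
        simp only [sum_filter]
        exact sum_comm
    _ = _ := by
        refine sum_congr rfl fun d hd ↦ ?_
        rw [← mul_sum, sum_heightBox_filter_dvd g (mem_Icc.1 hd).1]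

end MoebiusSieve

section SieveBound

open Finset
open scoped BigOperators ArithmeticFunction.Moebius

theorem coprime_prod_iff_forall_not_dvd {ι : Type*} [Fintype ι] {p : ι → ℕ}
    (hp : ∀ i, (p i).Prime) {d : ℕ} : d.Coprime (∏ i, p i) ↔ ∀ i, ¬ p i ∣ d := by
  simp only [Nat.coprime_prod_right_iff, mem_univ, true_imp_iff,
    fun i ↦ Nat.coprime_comm.trans ((hp i).coprime_iff_not_dvd (n := d))]

theorem sum_Icc_one_inv_sq_le (N : ℕ) : ∑ d ∈ Icc 1 N, ((d : ℝ) ^ 2)⁻¹ ≤ 2 := by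
  have hIcc : Icc 1 N = Ioo 0 (N + 1) := by
    ext
    simp only [mem_Icc, mem_Ioo]
    omega
  simpa [hIcc] using sum_Ioo_inv_sq_le (α := ℝ) 0 (N + 1)

theorem sum_Icc_filter_dvd_inv_sq_le {p : ℕ} (hp : 0 < p) (N : ℕ) :
    ∑ d ∈ Icc 1 N with p ∣ d, ((d : ℝ) ^ 2)⁻¹ ≤ 2 / p ^ 2 := by
  have hsub : {d ∈ Icc 1 N | p ∣ d} ⊆ (Icc 1 N).image (p * ·) := fun d hd ↦ by
    obtain ⟨hdN, c, rfl⟩ := mem_filter.1 hd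
    obtain ⟨h1, hN⟩ := mem_Icc.1 hdN
    exact mem_image_of_mem _ (mem_Icc.2
      ⟨Nat.pos_of_mul_pos_left h1, (Nat.le_mul_of_pos_left c hp).trans hN⟩)
  calc _ ≤ ∑ d ∈ (Icc 1 N).image (p * ·), ((d : ℝ) ^ 2)⁻¹ :=
        sum_le_sum_of_subset_of_nonneg hsub fun _ _ _ ↦ by positivity
    _ = ((p : ℝ) ^ 2)⁻¹ * ∑ c ∈ Icc 1 N, ((c : ℝ) ^ 2)⁻¹ := by
        rw [sum_image fun _ _ _ _ h ↦ Nat.eq_of_mul_eq_mul_left hp h, mul_sum]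
        simp only [Nat.cast_mul, mul_pow, mul_inv]
    _ ≤ ((p : ℝ) ^ 2)⁻¹ * 2 := by gcongr; exact sum_Icc_one_inv_sq_le N
    _ = 2 / p ^ 2 := by ring

theorem sum_Icc_filter_not_coprime_prod_inv_sq_le {ι : Type*} [Fintype ι] {p : ι → ℕ}
    (hp : ∀ i, (p i).Prime) (N : ℕ) :
    ∑ d ∈ Icc 1 N with ¬ d.Coprime (∏ i, p i), ((d : ℝ) ^ 2)⁻¹ ≤ ∑ i, 2 / (p i : ℝ) ^ 2 := by
  have hcover : ∀ d : ℕ, (if ¬ d.Coprime (∏ i, p i) then ((d : ℝ) ^ 2)⁻¹ else 0) ≤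
      ∑ i, if p i ∣ d then ((d : ℝ) ^ 2)⁻¹ else 0 := fun d ↦ by
    have hnonneg : ∀ i, 0 ≤ if p i ∣ d then ((d : ℝ) ^ 2)⁻¹ else 0 := fun i ↦ by positivity
    split_ifs with hcop
    · exact sum_nonneg fun i _ ↦ hnonneg i
    · obtain ⟨i, hdvd⟩ : ∃ i, p i ∣ d := by
        simpa only [coprime_prod_iff_forall_not_dvd hp, not_forall, not_not] using hcop
      exact (if_pos hdvd).symm.trans_le (single_le_sum (fun i _ ↦ hnonneg i) (mem_univ i))
  calc _ ≤ ∑ d ∈ Icc 1 N, ∑ i, if p i ∣ d then ((d : ℝ) ^ 2)⁻¹ else 0 := by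
        rw [sum_filter]
        exact sum_le_sum fun d _ ↦ hcover d
    _ = ∑ i, ∑ d ∈ Icc 1 N with p i ∣ d, ((d : ℝ) ^ 2)⁻¹ := by
        rw [sum_comm]
        simp only [sum_filter]
    _ ≤ _ := sum_le_sum fun i _ ↦ sum_Icc_filter_dvd_inv_sq_le (hp i).pos N

variable {n : ℕ} [NeZero n] {G : ZMod n → ZMod n → ℝ} {K m K' : ℝ}

theorem abs_sum_heightBox_scale_le (hK : ∀ a b, |G a b| ≤ K) (hm : |𝔼 a, 𝔼 b, G a b| ≤ m)
    (hcop : ∀ d : ℕ, d.Coprime n → ∀ a b, G (d ^ 4 * a) (d ^ 6 * b) = G a b)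
    (hncop : ∀ d : ℕ, ¬ d.Coprime n → ∀ a b, |G (d ^ 4 * a) (d ^ 6 * b)| ≤ K')
    {x : ℝ} {d : ℕ} (hd : 0 < d) (hdx : (d : ℝ) ≤ x) :
    |∑ AB ∈ heightBox (x / d), G (d ^ 4 * AB.1) (d ^ 6 * AB.2)| ≤
      (9 * m * x ^ 10 + 7 * n * K * x ^ 6 +
        if d.Coprime n then 0 else 9 * K' * x ^ 10) * ((d : ℝ) ^ 2)⁻¹ := by
  have hK0 : 0 ≤ K := (abs_nonneg _).trans (hK 0 0)
  have hm0 : 0 ≤ m := (abs_nonneg _).trans hm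
  have hd1 : (1 : ℝ) ≤ d := by exact_mod_cast hd
  have hx0 : 0 ≤ x := by linarith
  have hxd : 1 ≤ x / d := (one_le_div (by linarith)).2 hdx
  have hpow : ∀ k, 2 ≤ k → (x / d) ^ k ≤ x ^ k * ((d : ℝ) ^ 2)⁻¹ := fun k hk ↦ by
    rw [div_pow, div_eq_mul_inv]
    gcongr
  split_ifs with h
  · simp only [hcop d h]
    calc _ ≤ 9 * m * (x / d) ^ 10 + 7 * n * K * (x / d) ^ 6 := abs_sum_heightBox_le hK hm hxd
      _ ≤ 9 * m * (x ^ 10 * ((d : ℝ) ^ 2)⁻¹) + 7 * n * K * (x ^ 6 * ((d : ℝ) ^ 2)⁻¹) := by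
          gcongr <;> exact hpow _ (by norm_num)
      _ = _ := by ring
  · have hK'0 : 0 ≤ K' := (abs_nonneg _).trans (hncop d h 0 0)
    calc _ ≤ ∑ _AB ∈ heightBox (x / d), K' :=
          (abs_sum_le_sum_abs _ _).trans (sum_le_sum fun AB _ ↦ hncop d h _ _)
      _ = #(heightBox (x / d)) * K' := by rw [sum_const, nsmul_eq_mul]
      _ ≤ 9 * (x ^ 10 * ((d : ℝ) ^ 2)⁻¹) * K' := by
          gcongr
          exact (card_heightBox_le hxd).trans (by gcongr; exact hpow _ (by norm_num))
      _ = (9 * K' * x ^ 10) * ((d : ℝ) ^ 2)⁻¹ := by ring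
      _ ≤ _ := by gcongr; exact le_add_of_nonneg_left (by positivity)

open Classical in
theorem abs_sum_heightBox_filter_condM_le (hK : ∀ a b, |G a b| ≤ K)
    (hm : |𝔼 a, 𝔼 b, G a b| ≤ m)
    (hcop : ∀ d : ℕ, d.Coprime n → ∀ a b, G (d ^ 4 * a) (d ^ 6 * b) = G a b)
    (hncop : ∀ d : ℕ, ¬ d.Coprime n → ∀ a b, |G (d ^ 4 * a) (d ^ 6 * b)| ≤ K')
    {x : ℝ} (hx : 0 ≤ x) :
    |∑ AB ∈ heightBox x with CondM AB.1 AB.2, G AB.1 AB.2| ≤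
      18 * m * x ^ 10 + 14 * n * K * x ^ 6 +
        9 * K' * x ^ 10 * ∑ d ∈ Icc 1 ⌊x⌋₊ with ¬ d.Coprime n, ((d : ℝ) ^ 2)⁻¹ := by
  have hK0 : 0 ≤ K := (abs_nonneg _).trans (hK 0 0)
  have hm0 : 0 ≤ m := (abs_nonneg _).trans hm
  have hterm : ∀ d ∈ Icc 1 ⌊x⌋₊,
      |(μ d : ℝ) * ∑ AB ∈ heightBox (x / d), G (d ^ 4 * AB.1) (d ^ 6 * AB.2)| ≤
        (9 * m * x ^ 10 + 7 * n * K * x ^ 6) * ((d : ℝ) ^ 2)⁻¹ +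
          9 * K' * x ^ 10 * if ¬ d.Coprime n then ((d : ℝ) ^ 2)⁻¹ else 0 := fun d hd ↦ by
    obtain ⟨hd1, hdx⟩ := mem_Icc.1 hd
    have hmu : |(μ d : ℝ)| ≤ 1 := by exact_mod_cast ArithmeticFunction.abs_moebius_le_one
    have hbox := abs_sum_heightBox_scale_le hK hm hcop hncop hd1 ((Nat.le_floor_iff hx).1 hdx)
    rw [abs_mul]
    refine (mul_le_of_le_one_left (abs_nonneg _) hmu).trans (hbox.trans_eq ?_)
    split_ifs <;> ring
  have hidentity := sum_heightBox_filter_condM (fun A B ↦ G A B) hx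
  push_cast at hidentity
  calc _ ≤ (9 * m * x ^ 10 + 7 * n * K * x ^ 6) * ∑ d ∈ Icc 1 ⌊x⌋₊, ((d : ℝ) ^ 2)⁻¹ +
        9 * K' * x ^ 10 * ∑ d ∈ Icc 1 ⌊x⌋₊ with ¬ d.Coprime n, ((d : ℝ) ^ 2)⁻¹ := by
        rw [hidentity, sum_filter, mul_sum, mul_sum, ← sum_add_distrib]
        exact (abs_sum_le_sum_abs _ _).trans (sum_le_sum hterm)
    _ ≤ (9 * m * x ^ 10 + 7 * n * K * x ^ 6) * 2 +
        9 * K' * x ^ 10 * ∑ d ∈ Icc 1 ⌊x⌋₊ with ¬ d.Coprime n, ((d : ℝ) ^ 2)⁻¹ := by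
        gcongr
        exact sum_Icc_one_inv_sq_le _
    _ = _ := by ring

end SieveBound

section EllipticFamily

open Finset
open scoped BigOperators

theorem mem_Efam_pow_twelve_iff {x : ℝ} {AB : ℤ × ℤ} :
    AB ∈ Efam (x ^ 12) ↔
      AB ∈ heightBox x ∧ CondM AB.1 AB.2 ∧ 4 * AB.1 ^ 3 + 27 * AB.2 ^ 2 ≠ 0 := by
  have hA : ((|AB.1| ^ 3 : ℤ) : ℝ) ≤ x ^ 12 ↔ |(AB.1 : ℝ)| ≤ x ^ 4 := by
    rw [← pow_le_pow_iff_left₀ (abs_nonneg (AB.1 : ℝ)) (by positivity) three_ne_zero,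
      ← pow_mul]
    push_cast
    rfl
  have hB : ((AB.2 ^ 2 : ℤ) : ℝ) ≤ x ^ 12 ↔ |(AB.2 : ℝ)| ≤ x ^ 6 := by
    rw [← pow_le_pow_iff_left₀ (abs_nonneg (AB.2 : ℝ)) (by positivity) two_ne_zero,
      ← pow_mul, sq_abs]
    push_cast
    rfl
  have hne : 4 * AB.1 ^ 3 + 27 * AB.2 ^ 2 ≠ 0 → AB ≠ 0 := by
    rintro h rfl
    exact h (by norm_num)
  rw [Efam, Set.mem_ofPred_eq, Int.cast_max, max_le_iff, hA, hB, mem_heightBox]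
  tauto

open Classical in
theorem Efam_pow_twelve_eq_coe (x : ℝ) :
    Efam (x ^ 12) = ({AB ∈ {AB ∈ heightBox x | CondM AB.1 AB.2} |
      4 * AB.1 ^ 3 + 27 * AB.2 ^ 2 ≠ 0} : Finset (ℤ × ℤ)) := by
  ext AB
  rw [mem_Efam_pow_twelve_iff, mem_coe, mem_filter, mem_filter, and_assoc]

theorem finite_Efam {X : ℝ} (hX : 0 ≤ X) : (Efam X).Finite := by
  rw [← Real.rpow_inv_natCast_pow hX (by norm_num : 12 ≠ 0),
    Efam_pow_twelve_eq_coe]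
  exact finite_toSet _

theorem card_heightBox_filter_singular_le {x : ℝ} (hx : 1 ≤ x) :
    (#{AB ∈ heightBox x | 4 * AB.1 ^ 3 + 27 * AB.2 ^ 2 = 0} : ℝ) ≤ 3 * x ^ 6 := by
  set T := {AB ∈ heightBox x | 4 * AB.1 ^ 3 + 27 * AB.2 ^ 2 = 0}
  have hmaps : Set.MapsTo Prod.snd (T : Set (ℤ × ℤ)) (Icc (-⌊x ^ 6⌋) ⌊x ^ 6⌋ : Finset ℤ) :=
    fun AB hAB ↦ (mem_product.1 (mem_erase.1 (mem_filter.1 hAB).1).2).2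
  have hinj : Set.InjOn Prod.snd (T : Set (ℤ × ℤ)) := by
    rintro ⟨A, B⟩ hAB ⟨A', _⟩ hAB' rfl
    have hcube : A ^ 3 = A' ^ 3 := by linarith [(mem_filter.1 hAB).2, (mem_filter.1 hAB').2]
    rw [(Odd.strictMono_pow (R := ℤ) (by decide : Odd 3)).injective hcube]
  calc _ ≤ (#(Icc (-⌊x ^ 6⌋) ⌊x ^ 6⌋) : ℝ) := by
        exact_mod_cast card_le_card_of_injOn Prod.snd hmaps hinj
    _ = 2 * ⌊x ^ 6⌋ + 1 := card_Icc_neg_floor_floor (by positivity)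
    _ ≤ 3 * x ^ 6 := two_mul_floor_add_one_le (one_le_pow₀ hx)

variable {n : ℕ} [NeZero n] {G : ZMod n → ZMod n → ℝ} {K m K' : ℝ}

theorem abs_finsum_Efam_pow_twelve_le (hK : ∀ a b, |G a b| ≤ K) (hm : |𝔼 a, 𝔼 b, G a b| ≤ m)
    (hcop : ∀ d : ℕ, d.Coprime n → ∀ a b, G (d ^ 4 * a) (d ^ 6 * b) = G a b)
    (hncop : ∀ d : ℕ, ¬ d.Coprime n → ∀ a b, |G (d ^ 4 * a) (d ^ 6 * b)| ≤ K')
    {x : ℝ} (hx : 1 ≤ x) :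
    |∑ᶠ AB ∈ Efam (x ^ 12), G AB.1 AB.2| ≤
      18 * m * x ^ 10 + 17 * n * K * x ^ 6 +
        9 * K' * x ^ 10 * ∑ d ∈ Icc 1 ⌊x⌋₊ with ¬ d.Coprime n, ((d : ℝ) ^ 2)⁻¹ := by
  classical
  have hK0 : 0 ≤ K := (abs_nonneg _).trans (hK 0 0)
  have hn : (1 : ℝ) ≤ n := by exact_mod_cast NeZero.one_le
  have hx0 : 0 ≤ x := by linarith
  set S := {AB ∈ heightBox x | CondM AB.1 AB.2} with hS
  have hsingular : |∑ AB ∈ S with ¬ 4 * AB.1 ^ 3 + 27 * AB.2 ^ 2 ≠ 0, G AB.1 AB.2| ≤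
      3 * n * K * x ^ 6 := by
    calc _ ≤ ∑ AB ∈ heightBox x with 4 * AB.1 ^ 3 + 27 * AB.2 ^ 2 = 0, K := by
          simp only [not_not]
          refine (abs_sum_le_sum_abs _ _).trans ((sum_le_sum fun AB _ ↦ hK _ _).trans ?_)
          exact sum_le_sum_of_subset_of_nonneg (filter_subset_filter _ (filter_subset _ _))
            fun _ _ _ ↦ hK0
      _ ≤ 3 * x ^ 6 * K := by
          rw [sum_const, nsmul_eq_mul]
          exact mul_le_mul_of_nonneg_right (card_heightBox_filter_singular_le hx) hK0
      _ ≤ n * (3 * x ^ 6 * K) := le_mul_of_one_le_left (by positivity) hn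
      _ = _ := by ring
  have hsieve := abs_sum_heightBox_filter_condM_le hK hm hcop hncop hx0
  rw [Efam_pow_twelve_eq_coe, finsum_mem_coe_finset, ← hS]
  rw [← hS, ← sum_filter_add_sum_filter_not S fun AB ↦ 4 * AB.1 ^ 3 + 27 * AB.2 ^ 2 ≠ 0] at hsieve
  rw [abs_le] at hsieve hsingular ⊢
  constructor <;> linarith

end EllipticFamily

section ChineseRemainder

open Finset
open scoped BigOperators

theorem one_sub_sum_le_prod_one_sub {ι : Type*} {s : Finset ι} {t : ι → ℝ}
    (h0 : ∀ i ∈ s, 0 ≤ t i) (h1 : ∀ i ∈ s, t i ≤ 1) : 1 - ∑ i ∈ s, t i ≤ ∏ i ∈ s, (1 - t i) := by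
  classical
  induction s using Finset.induction_on with
  | empty => simp
  | insert i s hi ih =>
    simp only [forall_mem_insert] at h0 h1
    have hle : ∏ j ∈ s, (1 - t j) ≤ 1 :=
      prod_le_one (fun j hj ↦ sub_nonneg.2 (h1.2 j hj)) fun j hj ↦ sub_le_self _ (h0.2 j hj)
    rw [sum_insert hi, prod_insert hi]
    nlinarith [ih h0.2 h1.2, h0.1]

variable {ι : Type*} [Fintype ι] {p : ι → ℕ} {f : ∀ i, ZMod (p i) → ZMod (p i) → ℝ}

/-- The product of the functions `f i` on `ZMod (p i) × ZMod (p i)`, as a function of the residues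
modulo `∏ i, p i`. -/
noncomputable def crtProd (p : ι → ℕ) (f : ∀ i, ZMod (p i) → ZMod (p i) → ℝ)
    (a b : ZMod (∏ i, p i)) : ℝ :=
  ∏ i, f i (ZMod.castHom (dvd_prod_of_mem p (mem_univ i)) (ZMod (p i)) a)
    (ZMod.castHom (dvd_prod_of_mem p (mem_univ i)) (ZMod (p i)) b)

theorem crtProd_intCast (f : ∀ i, ZMod (p i) → ZMod (p i) → ℝ) (A B : ℤ) :
    crtProd p f A B = ∏ i, f i A B := by
  simp only [crtProd, map_intCast]

theorem expect_prod_castHom [∀ i, NeZero (p i)] [NeZero (∏ i, p i)]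
    (hp : Pairwise (Nat.Coprime.onFun p)) (g : ∀ i, ZMod (p i) → ℝ) :
    𝔼 a : ZMod (∏ i, p i), ∏ i, g i (ZMod.castHom (dvd_prod_of_mem p (mem_univ i)) _ a) =
      ∏ i, 𝔼 y, g i y := by
  classical
  simp only [Fintype.expect_eq_sum_div_card, ZMod.card, prod_div_distrib, Fintype.prod_sum,
    Nat.cast_prod]
  congr 1
  exact Fintype.sum_equiv (ZMod.prodEquivPi p hp).toEquiv _ _ fun a ↦
    prod_congr rfl fun i _ ↦ congrArg (g i) (ZMod.prodEquivPi_apply p hp a i).symm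

theorem expect_crtProd [∀ i, NeZero (p i)] [NeZero (∏ i, p i)]
    (hp : Pairwise (Nat.Coprime.onFun p)) (f : ∀ i, ZMod (p i) → ZMod (p i) → ℝ) :
    𝔼 a, 𝔼 b, crtProd p f a b = ∏ i, 𝔼 a, 𝔼 b, f i a b := by
  simp only [crtProd, expect_prod_castHom hp fun i ↦ f i _]
  exact expect_prod_castHom hp fun i x ↦ 𝔼 y, f i x y

theorem crtProd_scale_of_coprime (hp : ∀ i, (p i).Prime)
    (hf : ∀ i (d a b : ZMod (p i)), d ≠ 0 → f i (d ^ 4 * a) (d ^ 6 * b) = f i a b)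
    {d : ℕ} (hd : d.Coprime (∏ i, p i)) (a b : ZMod (∏ i, p i)) :
    crtProd p f (d ^ 4 * a) (d ^ 6 * b) = crtProd p f a b := by
  refine prod_congr rfl fun i _ ↦ ?_
  simp only [map_mul, map_pow, map_natCast]
  exact hf i _ _ _ fun h ↦ (coprime_prod_iff_forall_not_dvd hp).1 hd i
    ((ZMod.natCast_eq_zero_iff d (p i)).1 h)

theorem crtProd_scale_of_not_coprime (hp : ∀ i, (p i).Prime) (hf : ∀ i, f i 0 0 = 0)
    {d : ℕ} (hd : ¬ d.Coprime (∏ i, p i)) (a b : ZMod (∏ i, p i)) :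
    crtProd p f (d ^ 4 * a) (d ^ 6 * b) = 0 := by
  obtain ⟨i, hdvd⟩ : ∃ i, p i ∣ d := by
    simpa only [coprime_prod_iff_forall_not_dvd hp, not_forall, not_not] using hd
  refine prod_eq_zero (mem_univ i) ?_
  simp only [map_mul, map_pow, map_natCast, (ZMod.natCast_eq_zero_iff d (p i)).2 hdvd]
  simp [hf]

theorem abs_crtProd_le {K : ι → ℝ} (hf : ∀ i a b, |f i a b| ≤ K i) (a b : ZMod (∏ i, p i)) :
    |crtProd p f a b| ≤ ∏ i, K i := by
  rw [crtProd, abs_prod]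
  exact prod_le_prod (fun _ _ ↦ abs_nonneg _) fun i _ ↦ hf i _ _

end ChineseRemainder

section MomentBounds

open Finset
open scoped BigOperators

theorem finsum_mem_sub_const {α : Type*} {s : Set α} (hs : s.Finite) (f : α → ℝ) (c : ℝ) :
    ∑ᶠ a ∈ s, (f a - c) = ∑ᶠ a ∈ s, f a - c * s.ncard := by
  rw [finsum_mem_eq_finite_toFinset_sum _ hs, finsum_mem_eq_finite_toFinset_sum _ hs,
    sum_sub_distrib, sum_const, nsmul_eq_mul, Set.ncard_eq_toFinset_card s hs, mul_comm]

variable {ι : Type*} [Fintype ι] {p : ι → ℕ} [hp : ∀ i, Fact (p i).Prime]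

theorem abs_finsum_Efam_prod_sub_le (hinj : Function.Injective p)
    {f : ∀ i, ZMod (p i) → ZMod (p i) → ℝ} {K : ι → ℝ} (hK : ∀ i a b, |f i a b| ≤ K i)
    (hzero : ∀ i, f i 0 0 = 0)
    (hscale : ∀ i (d a b : ZMod (p i)), d ≠ 0 → f i (d ^ 4 * a) (d ^ 6 * b) = f i a b)
    {c m : ℝ} (hm : |∏ i, 𝔼 a, 𝔼 b, f i a b - c| ≤ m) {X : ℝ} (hX : 1 ≤ X) :
    |∑ᶠ AB ∈ Efam X, ∏ i, f i AB.1 AB.2 - c * (Efam X).ncard| ≤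
      17 * (∏ i, K i + |c|) * ((∏ i, (p i : ℝ)) * X ^ (1 / 2 : ℝ)) +
        18 * (m + |c| * ∑ i, 1 / (p i : ℝ) ^ 2) * X ^ (5 / 6 : ℝ) := by
  have hX0 : 0 ≤ X := by linarith
  have hprime : ∀ i, (p i).Prime := fun i ↦ (hp i).out
  have hcoprime : Pairwise (Nat.Coprime.onFun p) := fun i j hij ↦
    (Nat.coprime_primes (hprime i) (hprime j)).2 (hinj.ne hij)
  have : NeZero (∏ i, p i) := ⟨prod_ne_zero_iff.2 fun i _ ↦ (hprime i).ne_zero⟩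
  set x : ℝ := X ^ (12⁻¹ : ℝ)
  have hx : 1 ≤ x := Real.one_le_rpow hX (by norm_num)
  have hpow : ∀ k : ℕ, x ^ k = X ^ (k / 12 : ℝ) := fun k ↦ by
    rw [← Real.rpow_mul_natCast hX0, inv_mul_eq_div]
  have hx12 : x ^ 12 = X := by simp [hpow]
  have hx10 : x ^ 10 = X ^ (5 / 6 : ℝ) := by rw [hpow]; norm_num
  have hx6 : x ^ 6 = X ^ (1 / 2 : ℝ) := by rw [hpow]; norm_num
  have hmain := abs_finsum_Efam_pow_twelve_le (G := fun a b ↦ crtProd p f a b - c)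
    (fun a b ↦ (abs_sub _ _).trans (add_le_add_left (abs_crtProd_le hK a b) |c|))
    (by simpa only [expect_sub_distrib, Fintype.expect_const, expect_crtProd hcoprime] using hm)
    (fun d hd a b ↦ by rw [crtProd_scale_of_coprime hprime hscale hd])
    (fun d hd a b ↦ by rw [crtProd_scale_of_not_coprime hprime hzero hd, zero_sub, abs_neg]) hx
  simp only [crtProd_intCast, hx12, hx10, hx6, finsum_mem_sub_const (finite_Efam hX0),
    Nat.cast_prod] at hmain
  calc _ ≤ 18 * m * X ^ (5 / 6 : ℝ) + 17 * (∏ i, (p i : ℝ)) * (∏ i, K i + |c|) * X ^ (1 / 2 : ℝ) +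
        9 * |c| * X ^ (5 / 6 : ℝ) * ∑ i, 2 / (p i : ℝ) ^ 2 :=
        hmain.trans (by gcongr; exact sum_Icc_filter_not_coprime_prod_inv_sq_le hprime _)
    _ = _ := by
        simp only [div_eq_mul_inv, one_mul, ← mul_sum]
        ring

variable {e r : ι → ℕ}

theorem prod_expect_localCoeff_pow_eq_zero {j : ι} (hp5 : 5 ≤ p j) (he : e j = 1) (hr : Odd (r j)) :
    ∏ i, 𝔼 a : ZMod (p i), 𝔼 b, localCoeff (e i) a b ^ r i = 0 := by
  refine prod_eq_zero (mem_univ j) ?_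
  rw [he]
  exact expect_localCoeff_one_pow_of_odd (ringChar_zmod_ne_two hp5) hr

theorem abs_expect_localCoeff_two_zmod_le {q : ℕ} [Fact q.Prime] (hq : 5 ≤ q) :
    |𝔼 a : ZMod q, 𝔼 b, localCoeff 2 a b| ≤ 1 / q := by
  have h2 : (2 : ZMod q) ≠ 0 := by
    exact_mod_cast zmod_natCast_ne_zero_of_lt (n := 2) two_pos (by omega : 2 < q)
  have h3 : (3 : ZMod q) ≠ 0 := by
    exact_mod_cast zmod_natCast_ne_zero_of_lt (n := 3) three_pos (by omega : 3 < q)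
  simpa only [ZMod.card] using abs_expect_localCoeff_two_le h2 h3

theorem abs_prod_expect_localCoeff_pow_sub_le (hp5 : ∀ i, 5 ≤ p i)
    (her : ∀ i, (e i = 1 ∧ r i = 2) ∨ (e i = 2 ∧ r i = 1))
    [Decidable (∀ i, e i = 1 ∧ r i = 2)] :
    |∏ i, 𝔼 a : ZMod (p i), 𝔼 b, localCoeff (e i) a b ^ r i -
      if ∀ i, e i = 1 ∧ r i = 2 then 1 else 0| ≤ ∑ i, 1 / (p i : ℝ) := by
  set M : ι → ℝ := fun i ↦ 𝔼 a : ZMod (p i), 𝔼 b, localCoeff (e i) a b ^ r i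
  have hinv0 : ∀ i, 0 ≤ 1 / (p i : ℝ) := fun i ↦ by positivity
  have hinv1 : ∀ i, 1 / (p i : ℝ) ≤ 1 := fun i ↦ by
    rw [one_div]
    exact Nat.cast_inv_le_one _
  have hM1 : ∀ i, e i = 1 ∧ r i = 2 → M i = 1 - 1 / (p i : ℝ) := fun i ⟨he, hr⟩ ↦ by
    simp only [M, he, hr, expect_localCoeff_one_sq (ringChar_zmod_ne_two (hp5 i)), ZMod.card]
  have hM2 : ∀ i, e i = 2 ∧ r i = 1 → |M i| ≤ 1 / (p i : ℝ) := fun i ⟨he, hr⟩ ↦ by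
    simpa only [M, he, hr, pow_one] using abs_expect_localCoeff_two_zmod_le (hp5 i)
  split_ifs with hall
  · have hlower := one_sub_sum_le_prod_one_sub (fun i _ ↦ hinv0 i) fun i (_ : i ∈ univ) ↦ hinv1 i
    have hupper : ∏ i, (1 - 1 / (p i : ℝ)) ≤ 1 :=
      prod_le_one (fun i _ ↦ sub_nonneg.2 (hinv1 i)) fun i _ ↦ sub_le_self _ (hinv0 i)
    rw [prod_congr rfl fun i _ ↦ hM1 i (hall i), abs_le]
    constructor <;> linarith
  · obtain ⟨j, hj⟩ := not_forall.1 hall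
    have hle : ∀ i, |M i| ≤ 1 := fun i ↦ by
      rcases her i with hi | hi
      · rw [hM1 i hi, abs_le]
        constructor <;> linarith [hinv0 i, hinv1 i]
      · exact (hM2 i hi).trans (hinv1 i)
    classical
    calc |∏ i, M i - 0| = |M j| * ∏ i ∈ univ.erase j, |M i| := by
          rw [sub_zero, abs_prod, mul_prod_erase univ (fun i ↦ |M i|) (mem_univ j)]
      _ ≤ |M j| := mul_le_of_le_one_right (abs_nonneg _)
          (prod_le_one (fun i _ ↦ abs_nonneg _) fun i _ ↦ hle i)
      _ ≤ 1 / p j := hM2 j ((her j).resolve_left hj)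
      _ ≤ ∑ i, 1 / (p i : ℝ) :=
          single_le_sum (f := fun i ↦ 1 / (p i : ℝ)) (fun i _ ↦ hinv0 i) (mem_univ j)

end MomentBounds

section MainTheorem

open Finset
open scoped BigOperators

variable {ι : Type*} [Fintype ι] {p e r : ι → ℕ}

theorem abs_finsum_Efam_prod_lamPow_sub_le [hp : ∀ i, Fact (p i).Prime] (hp5 : ∀ i, 5 ≤ p i)
    (hinj : Function.Injective p) (hr : ∀ i, r i ≠ 0) {c m : ℝ}
    (hm : |∏ i, 𝔼 a : ZMod (p i), 𝔼 b, localCoeff (e i) a b ^ r i - c| ≤ m)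
    {X : ℝ} (hX : 1 ≤ X) :
    |∑ᶠ AB ∈ Efam X, ∏ i, lamPow (p i) (hp i).out AB.1 AB.2 (e i) ^ r i - c * (Efam X).ncard| ≤
      17 * (∏ i, 2025 ^ r i + |c|) * ((∏ i, (p i : ℝ)) * X ^ (1 / 2 : ℝ)) +
        18 * (m + |c| * ∑ i, 1 / (p i : ℝ) ^ 2) * X ^ (5 / 6 : ℝ) := by
  simp only [lamPow_eq_localCoeff (hp5 _)]
  refine abs_finsum_Efam_prod_sub_le hinj (f := fun i a b ↦ localCoeff (e i) a b ^ r i)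
    (fun i a b ↦ ?_) (fun i ↦ ?_) (fun i d a b hd ↦ ?_) hm hX
  · rw [abs_pow]
    exact pow_le_pow_left₀ (abs_nonneg _) (abs_localCoeff_le (hp5 i) _ _ _) _
  · rw [localCoeff_zero_zero (ringChar_zmod_ne_two (hp5 i)), zero_pow (hr i)]
  · rw [localCoeff_scale _ hd]

theorem abs_finsum_Efam_prod_lamPow_le_of_odd (hp : ∀ i, (p i).Prime) (hp5 : ∀ i, 5 ≤ p i)
    (hinj : Function.Injective p) (hr : ∀ i, r i ≠ 0) (hodd : ∃ j, e j = 1 ∧ Odd (r j))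
    {X : ℝ} (hX : 1 ≤ X) :
    |∑ᶠ AB ∈ Efam X, ∏ i, lamPow (p i) (hp i) AB.1 AB.2 (e i) ^ r i| ≤
      17 * (∏ i, 2025 ^ r i) * ((∏ i, (p i : ℝ)) * X ^ (1 / 2 : ℝ)) := by
  have := fun i ↦ Fact.mk (hp i)
  obtain ⟨j, hej, hrj⟩ := hodd
  have hm : |∏ i, 𝔼 a : ZMod (p i), 𝔼 b, localCoeff (e i) a b ^ r i - 0| ≤ 0 := by
    simp only [prod_expect_localCoeff_pow_eq_zero (hp5 j) hej hrj, sub_zero, abs_zero, le_refl]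
  simpa only [zero_mul, sub_zero, abs_zero, add_zero, mul_zero] using
    abs_finsum_Efam_prod_lamPow_sub_le hp5 hinj hr hm hX

theorem abs_finsum_Efam_prod_lamPow_sub_le_of_even [Decidable (∀ i, e i = 1 ∧ r i = 2)]
    (hp : ∀ i, (p i).Prime) (hp5 : ∀ i, 5 ≤ p i) (hinj : Function.Injective p)
    (her : ∀ i, (e i = 1 ∧ r i = 2) ∨ (e i = 2 ∧ r i = 1)) {X : ℝ} (hX : 1 ≤ X) :
    |∑ᶠ AB ∈ Efam X, ∏ i, lamPow (p i) (hp i) AB.1 AB.2 (e i) ^ r i -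
        (if ∀ i, e i = 1 ∧ r i = 2 then 1 else 0) * (Efam X).ncard| ≤
      17 * (∏ i, 2025 ^ r i + 1) * ((∏ i, (p i : ℝ)) * X ^ (1 / 2 : ℝ)) +
        36 * ((∑ i, 1 / (p i : ℝ)) * X ^ (5 / 6 : ℝ)) := by
  have := fun i ↦ Fact.mk (hp i)
  have hr : ∀ i, r i ≠ 0 := fun i ↦ by rcases her i with h | h <;> omega
  set c : ℝ := if ∀ i, e i = 1 ∧ r i = 2 then 1 else 0
  have hc : |c| ≤ 1 := by simp only [c]; split_ifs <;> norm_num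
  have hsum : ∑ i, 1 / (p i : ℝ) ^ 2 ≤ ∑ i, 1 / (p i : ℝ) := sum_le_sum fun i _ ↦ by
    have hpi : (1 : ℝ) ≤ p i := by exact_mod_cast (hp i).one_le
    exact one_div_le_one_div_of_le (by linarith) (le_self_pow₀ hpi two_ne_zero)
  calc _ ≤ 17 * (∏ i, 2025 ^ r i + |c|) * ((∏ i, (p i : ℝ)) * X ^ (1 / 2 : ℝ)) +
        18 * (∑ i, 1 / (p i : ℝ) + |c| * ∑ i, 1 / (p i : ℝ) ^ 2) * X ^ (5 / 6 : ℝ) :=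
        abs_finsum_Efam_prod_lamPow_sub_le hp5 hinj hr
          (abs_prod_expect_localCoeff_pow_sub_le hp5 her) hX
    _ ≤ 17 * (∏ i, 2025 ^ r i + 1) * ((∏ i, (p i : ℝ)) * X ^ (1 / 2 : ℝ)) +
        18 * (∑ i, 1 / (p i : ℝ) + 1 * ∑ i, 1 / (p i : ℝ)) * X ^ (5 / 6 : ℝ) := by gcongr
    _ = _ := by ring

theorem stmt_19_general (e r : ι → ℕ) [Decidable (∀ i, e i = 1 ∧ r i = 2)]
    (her : ∀ i, (e i = 1 ∧ (Odd (r i) ∨ r i = 2)) ∨ (e i = 2 ∧ r i = 1)) :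
    ∃ C : ℝ, 0 < C ∧ ∀ X : ℝ, 1 ≤ X →
      ∀ (p : ι → ℕ) (hp : ∀ i, (p i).Prime), (∀ i, 5 ≤ p i) → Function.Injective p →
      ((∃ j, e j = 1 ∧ Odd (r j)) →
        |∑ᶠ AB ∈ Efam X, ∏ i, (lamPow (p i) (hp i) AB.1 AB.2 (e i)) ^ (r i)|
          ≤ C * 2 ^ (sInf {n : ℕ | Odd n ∧ ∃ i, r i = n}) * (∏ i, (p i : ℝ))
              * X ^ ((1 : ℝ) / 2))
      ∧ (¬ (∃ j, e j = 1 ∧ Odd (r j)) →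
        |(∑ᶠ AB ∈ Efam X, ∏ i, (lamPow (p i) (hp i) AB.1 AB.2 (e i)) ^ (r i))
            - (if ∀ i, e i = 1 ∧ r i = 2 then (1 : ℝ) else 0) * ((Efam X).ncard : ℝ)|
          ≤ C * ((∏ i, (p i : ℝ)) * X ^ ((1 : ℝ) / 2)
              + (∑ i, 1 / (p i : ℝ)) * X ^ ((5 : ℝ) / 6))) := by
  set K : ℝ := ∏ i, 2025 ^ r i
  have hK : 0 < K := by positivity
  have hr : ∀ i, r i ≠ 0 := fun i ↦ by
    rcases her i with ⟨-, h | h⟩ | h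
    exacts [h.pos.ne', by omega, by omega]
  refine ⟨36 * (K + 1), by positivity, fun X hX p hp hp5 hinj ↦ ?_⟩
  refine ⟨fun hodd ↦ ?_, fun hodd ↦ ?_⟩
  · set t : ℝ := 2 ^ sInf {n : ℕ | Odd n ∧ ∃ i, r i = n}
    have ht : 1 ≤ t := one_le_pow₀ one_le_two
    calc _ ≤ 17 * K * ((∏ i, (p i : ℝ)) * X ^ (1 / 2 : ℝ)) :=
          abs_finsum_Efam_prod_lamPow_le_of_odd hp hp5 hinj hr hodd hX
      _ ≤ 36 * (K + 1) * t * ((∏ i, (p i : ℝ)) * X ^ (1 / 2 : ℝ)) :=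
          mul_le_mul_of_nonneg_right (by nlinarith) (by positivity)
      _ = _ := by ring
  · have her' : ∀ i, (e i = 1 ∧ r i = 2) ∨ (e i = 2 ∧ r i = 1) := fun i ↦
      (her i).imp_left fun h ↦ ⟨h.1, h.2.resolve_left fun ho ↦ hodd ⟨i, h.1, ho⟩⟩
    calc _ ≤ 17 * (K + 1) * ((∏ i, (p i : ℝ)) * X ^ (1 / 2 : ℝ)) +
          36 * ((∑ i, 1 / (p i : ℝ)) * X ^ (5 / 6 : ℝ)) :=
          abs_finsum_Efam_prod_lamPow_sub_le_of_even hp hp5 hinj her' hX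
      _ ≤ 36 * (K + 1) * ((∏ i, (p i : ℝ)) * X ^ (1 / 2 : ℝ)) +
          36 * (K + 1) * ((∑ i, 1 / (p i : ℝ)) * X ^ (5 / 6 : ℝ)) := by gcongr <;> linarith
      _ = _ := by ring

end MainTheorem

theorem stmt_19 (k : ℕ) (hk : 1 ≤ k) (ε : ℝ) (hε : 0 < ε) (hε3 : ε < 1 / 3)
    (e r : Fin k → ℕ)
    (her : ∀ i, (e i = 1 ∧ (Odd (r i) ∨ r i = 2)) ∨ (e i = 2 ∧ r i = 1)) :
    ∃ C : ℝ, 0 < C ∧ ∀ (X : ℝ), 2 ≤ X →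
      ∀ (p : Fin k → ℕ) (hp : ∀ i, (p i).Prime), (∀ i, 5 ≤ p i) →
      Function.Injective p → (∏ i, (p i : ℝ)) ≤ X ^ ((1 : ℝ) / 3 - ε) →
      ((∃ j, e j = 1 ∧ Odd (r j)) →
        |∑ᶠ AB ∈ Efam X, ∏ i, (lamPow (p i) (hp i) AB.1 AB.2 (e i)) ^ (r i)|
          ≤ C * 2 ^ (sInf {n : ℕ | Odd n ∧ ∃ i, r i = n}) * (∏ i, (p i : ℝ))
              * X ^ ((1 : ℝ) / 2))
      ∧ (¬ (∃ j, e j = 1 ∧ Odd (r j)) →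
        |(∑ᶠ AB ∈ Efam X, ∏ i, (lamPow (p i) (hp i) AB.1 AB.2 (e i)) ^ (r i))
            - (if ∀ i, e i = 1 ∧ r i = 2 then (1 : ℝ) else 0) * ((Efam X).ncard : ℝ)|
          ≤ C * ((∏ i, (p i : ℝ)) * X ^ ((1 : ℝ) / 2)
              + (∑ i, 1 / (p i : ℝ)) * X ^ ((5 : ℝ) / 6))) := by
  obtain ⟨C, hC, hbound⟩ := stmt_19_general e r her
  exact ⟨C, hC, fun X hX p hp hp5 hinj _ ↦ hbound X (by linarith) p hp hp5 hinj⟩
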